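/- arXiv:2206.13146 — 3 statements merged into one kernel-verified Lean document; each statement's English description precedes it below -/
import Mathlib

section
/- Let f : ℝⁿ → [0,∞) be upper semicontinuous and log-concave with 0 < ∫_{ℝⁿ} f dx < ∞. Then the measure μ_f is finite and has a finite first moment, i.e. ∫_{ℝⁿ} |x| dμ_f(x) < ∞, and the measure ν_f is finite, i.e. ∫_{∂K_f} f dH^{n−1} < ∞. -/
open MeasureTheory Set Filter Topology Pointwise
open scoped ENNReal RealInnerProductSpace NNReal

noncomputable section

/-- Euclidean space ℝⁿ. -/
abbrev Euc (n : ℕ) := EuclideanSpace ℝ (Fin n)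

/-- A nonnegative function is log-concave if `f((1-λ)x+λy) ≥ f(x)^{1-λ} f(y)^λ`. -/
def LogConcaveFn {n : ℕ} (f : Euc n → ℝ) : Prop :=
  ∀ x y : Euc n, ∀ l : ℝ, 0 ≤ l → l ≤ 1 →
    f x ^ (1 - l) * f y ^ l ≤ f ((1 - l) • x + l • y)

/-- Sup-convolution `(f⋆g)(x) = sup_y f(y) g(x-y)`, valued in `[0,∞]`. -/
def supConv {n : ℕ} (f g : Euc n → ℝ) (x : Euc n) : ℝ≥0∞ :=
  ⨆ y : Euc n, ENNReal.ofReal (f y * g (x - y))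

/-- Dilation `(t·g)(x) = g(x/t)^t`. -/
def dil {n : ℕ} (t : ℝ) (g : Euc n → ℝ) (x : Euc n) : ℝ :=
  g (t⁻¹ • x) ^ t

/-- Total mass `∫ f` of a nonnegative function, in `[0,∞]`. -/
def totalMass {n : ℕ} (f : Euc n → ℝ) : ℝ≥0∞ := ∫⁻ x, ENNReal.ofReal (f x)

/-- The difference quotient `(∫ f⋆(t·g) − ∫ f)/t`, valued in `EReal`. -/
def deltaQuot {n : ℕ} (f g : Euc n → ℝ) (t : ℝ) : EReal :=
  ((t⁻¹ : ℝ) : EReal) *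
    (((∫⁻ x, supConv f (dil t g) x : ℝ≥0∞) : EReal) - ((totalMass f : ℝ≥0∞) : EReal))

/-- The support `K_f`: closure of `{x : f(x) > 0}`. -/
def spt {n : ℕ} (f : Euc n → ℝ) : Set (Euc n) := closure {x | 0 < f x}

/-- `φ = -log f`. -/
def mlog {n : ℕ} (f : Euc n → ℝ) (x : Euc n) : ℝ := -Real.log (f x)

/-- The measure `μ_f`: pushforward of `f dx` under the (a.e. defined) gradient of `φ = -log f`. -/
def muF {n : ℕ} (f : Euc n → ℝ) : Measure (Euc n) :=
  Measure.map (gradient (mlog f)) (volume.withDensity fun x => ENNReal.ofReal (f x))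

-- The outer unit normal (Gauss) map of a convex set `K`, defined (H^{n-1}-a.e. uniquely)
-- at boundary points; junk value `0` where no outer normal exists.
open Classical in
def gaussMap {n : ℕ} (K : Set (Euc n)) (x : Euc n) : Euc n :=
  if h : ∃ u : Euc n, ‖u‖ = 1 ∧ ∀ y ∈ K, ⟪y - x, u⟫ ≤ 0 then h.choose else 0

/-- The weighted boundary measure `f · H^{n-1}|_{∂K_f}`. -/
def bdryMeasure {n : ℕ} (f : Euc n → ℝ) : Measure (Euc n) :=
  ((μH[(n : ℝ) - 1] : Measure (Euc n)).restrict (frontier (spt f))).withDensity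
    (fun x => ENNReal.ofReal (f x))

/-- The measure `ν_f` on the sphere: pushforward of `f · H^{n-1}|_{∂K_f}` under the Gauss map. -/
def nuF {n : ℕ} (f : Euc n → ℝ) : Measure (Euc n) :=
  Measure.map (gaussMap (spt f)) (bdryMeasure f)

/-- Positive part of an extended real, in `[0,∞]`. -/
def epos (a : EReal) : ℝ≥0∞ := if a = ⊤ then ⊤ else ENNReal.ofReal a.toReal

/-- Integral of an `EReal`-valued function: positive part minus negative part. -/
def eInt {n : ℕ} (μ : Measure (Euc n)) (h : Euc n → EReal) : EReal :=
  ((∫⁻ x, epos (h x) ∂μ : ℝ≥0∞) : EReal) - ((∫⁻ x, epos (-(h x)) ∂μ : ℝ≥0∞) : EReal)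

/-- The support function `h_g = (-log g)^*` of a log-concave function, valued in `EReal`. -/
def hSupp {n : ℕ} (g : Euc n → ℝ) (x : Euc n) : EReal :=
  ⨆ y : Euc n, (((⟪x, y⟫ : ℝ) : EReal) +
    (if g y = 0 then (⊥ : EReal) else ((Real.log (g y) : ℝ) : EReal)))

/-- The support function of a set, valued in `EReal`. -/
def hSetE {n : ℕ} (K : Set (Euc n)) (x : Euc n) : EReal :=
  ⨆ y ∈ K, ((⟪y, x⟫ : ℝ) : EReal)

/-- The support function of a set, real-valued: `h_K(x) = sup_{y ∈ K} ⟨y, x⟩`. -/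
def hSetR {n : ℕ} (K : Set (Euc n)) (x : Euc n) : ℝ :=
  sSup ((fun y => ⟪y, x⟫) '' K)

/-- Divergence of a vector field: the trace of its derivative. -/
def dvg {n : ℕ} (Φ : Euc n → Euc n) (x : Euc n) : ℝ :=
  LinearMap.trace ℝ (Euc n) (fderiv ℝ Φ x : Euc n →ₗ[ℝ] Euc n)

/-- The anisotropic total variation `TV_L(f)`. -/
def TVL {n : ℕ} (L : Set (Euc n)) (f : Euc n → ℝ) : EReal :=
  ⨆ Φ : {Φ : Euc n → Euc n //
      ContDiff ℝ 1 Φ ∧ HasCompactSupport Φ ∧ ∀ x, gauge L (Φ x) ≤ 1},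
    ((∫ x, f x * dvg Φ.1 x : ℝ) : EReal)

/-- The anisotropic perimeter `Per_L(A) = TV_L(1_A)`. -/
def PerL {n : ℕ} (L : Set (Euc n)) (A : Set (Euc n)) : EReal :=
  TVL L (A.indicator fun _ => (1 : ℝ))

/-- The surface area measure `S_F` of a convex body: pushforward of `H^{n-1}|_{∂F}`
under the Gauss map. -/
def surfMeasure {n : ℕ} (F : Set (Euc n)) : Measure (Euc n) :=
  Measure.map (gaussMap F) ((μH[(n : ℝ) - 1] : Measure (Euc n)).restrict (frontier F))


lemma LogConcaveFn.convex_ge {n : ℕ} {f : Euc n → ℝ} (h : LogConcaveFn f) {s : ℝ} (hs : 0 < s) :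
    Convex ℝ {x | s ≤ f x} := by
  intro x hx y hy a b ha hb hab
  simp only [mem_ofPred_eq] at *
  have h1 := h x y b hb (by linarith)
  have e : 1 - b = a := by linarith
  rw [e] at h1
  refine le_trans ?_ h1
  calc s = s ^ a * s ^ b := by rw [← Real.rpow_add hs, hab, Real.rpow_one]
    _ ≤ _ := by
      have := hs.le.trans hx
      gcongr

lemma LogConcaveFn.convex_pos {n : ℕ} {f : Euc n → ℝ} (h : LogConcaveFn f) :
    Convex ℝ {x | 0 < f x} := by
  intro x hx y hy a b ha hb hab
  simp only [mem_ofPred_eq] at *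
  have h1 := h x y b hb (by linarith)
  have e : 1 - b = a := by linarith
  rw [e] at h1
  refine lt_of_lt_of_le ?_ h1
  positivity

lemma exists_ball_ge {n : ℕ} (f : Euc n → ℝ) (hflc : LogConcaveFn f)
    (hfpos : 0 < totalMass f) :
    ∃ x0 : Euc n, ∃ r δ : ℝ, 0 < r ∧ 0 < δ ∧ ∀ x ∈ Metric.ball x0 r, δ ≤ f x := by
  have key : ∃ k : ℕ, (interior {x | (1 / ((k : ℝ) + 1)) ≤ f x}).Nonempty := by
    by_contra! hcon
    have hz : ∀ k : ℕ, volume {x | (1 / ((k : ℝ) + 1)) ≤ f x} = 0 := by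
      intro k
      have hc := hflc.convex_ge (s := 1 / ((k : ℝ) + 1)) (by positivity)
      refine measure_mono_null ?_ (hc.addHaar_frontier volume)
      rw [frontier, hcon k, sdiff_empty]
      exact subset_closure
    have h0 : volume {x | 0 < f x} = 0 := by
      refine measure_mono_null ?_ (measure_iUnion_null hz)
      intro x hx
      obtain ⟨k, hk⟩ := exists_nat_one_div_lt (show 0 < f x from hx)
      exact mem_iUnion.2 ⟨k, hk.le⟩
    have : totalMass f = 0 := by
      unfold totalMass
      have : (fun x => ENNReal.ofReal (f x)) =ᵐ[volume] 0 := by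
        have : ∀ᵐ x, ¬ (0 < f x) := by
          rw [ae_iff]; simpa using h0
        filter_upwards [this] with x hx
        simpa using hx
      rw [lintegral_congr_ae this]; simp
    exact hfpos.ne' this
  obtain ⟨k, x0, hx0⟩ := key
  obtain ⟨r, hr, hb⟩ := Metric.isOpen_iff.1 isOpen_interior x0 hx0
  refine ⟨x0, r, 1 / ((k : ℝ) + 1), hr, by positivity, fun x hx => ?_⟩
  have := interior_subset (hb hx)
  exact this

lemma bounded_of_finite {n : ℕ} {L : Set (Euc n)} (hL : Convex ℝ L) (hm : MeasurableSet L)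
    (hfin : volume L ≠ ⊤) {x0 : Euc n} {r : ℝ} (hr : 0 < r) (hb : Metric.ball x0 r ⊆ L) :
    ∃ R : ℝ, 0 < R ∧ ∀ y ∈ L, ‖y - x0‖ < R := by
  have ht : Tendsto (fun k : ℕ => volume (L \ Metric.ball x0 k)) atTop (𝓝 0) := by
    have := tendsto_measure_iInter_atTop (μ := volume) (s := fun k : ℕ => L \ Metric.ball x0 k)
      (fun k => (hm.diff measurableSet_ball).nullMeasurableSet)
      (fun a b hab => sdiff_subset_sdiff_right (Metric.ball_subset_ball (by exact_mod_cast hab)))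
      ⟨0, (measure_mono sdiff_subset).trans_lt hfin.lt_top |>.ne⟩
    have e : (⋂ k : ℕ, L \ Metric.ball x0 (k : ℝ)) = ∅ := by
      rw [eq_empty_iff_forall_notMem]
      intro x hx
      obtain ⟨k, hk⟩ := exists_nat_gt (dist x x0)
      exact (mem_iInter.1 hx k).2 hk
    simpa [e, Function.comp_def] using this
  have hpos : 0 < volume (Metric.ball x0 (r / 2)) := Metric.measure_ball_pos _ _ (by positivity)
  obtain ⟨k, hk⟩ := (ht.eventually (gt_mem_nhds hpos)).exists
  refine ⟨2 * (k + r), by positivity, fun y hy => ?_⟩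
  by_contra! hcon
  have hsub : Metric.ball (x0 + (1/2 : ℝ) • (y - x0)) (r / 2) ⊆ L \ Metric.ball x0 k := by
    intro z hz
    rw [Metric.mem_ball, dist_eq_norm] at hz
    constructor
    · have hw : x0 + (2 : ℝ) • (z - (x0 + (1/2 : ℝ) • (y - x0))) ∈ L := by
        apply hb
        rw [Metric.mem_ball, dist_eq_norm, add_sub_cancel_left, norm_smul]
        norm_num; linarith
      have := hL hw hy (show (0:ℝ) ≤ 1/2 by norm_num) (show (0:ℝ) ≤ 1/2 by norm_num) (by norm_num)
      convert this using 1
      module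
    · rw [Metric.mem_ball, dist_eq_norm, not_lt]
      have : (1/2 : ℝ) • (y - x0) = (z - x0) - (z - (x0 + (1/2 : ℝ) • (y - x0))) := by module
      have h2 := norm_sub_le (z - x0) (z - (x0 + (1/2 : ℝ) • (y - x0)))
      rw [← this, norm_smul] at h2
      norm_num at h2 hz
      linarith
  have := measure_mono (μ := volume) hsub
  rw [Measure.addHaar_ball_center] at this hk
  exact absurd hk (not_lt.2 this)

lemma decay {n : ℕ} (f : Euc n → ℝ) (hf0 : ∀ x, 0 ≤ f x) (hfusc : UpperSemicontinuous f)
    (hflc : LogConcaveFn f) (hffin : totalMass f < ⊤) {x0 : Euc n} {r δ : ℝ} (hr : 0 < r)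
    (hδ : 0 < δ) (hb : ∀ x ∈ Metric.ball x0 r, δ ≤ f x) :
    ∃ A c : ℝ, 0 < A ∧ 0 < c ∧ ∀ x, f x ≤ A * Real.exp (-c * ‖x‖) := by
  set s := δ * Real.exp (-1) with hs
  have hspos : 0 < s := by positivity
  have hsδ : s ≤ δ := by
    have : Real.exp (-1) ≤ 1 := Real.exp_le_one_iff.2 (by norm_num)
    nlinarith
  have hmeas : Measurable f := hfusc.measurable
  obtain ⟨R, hR, hL⟩ := bounded_of_finite (L := {x | s ≤ f x}) (hflc.convex_ge hspos)
    (measurableSet_le measurable_const hmeas) (by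
      have h1 := mul_meas_ge_le_lintegral (μ := (volume : Measure (Euc n)))
        hmeas.ennreal_ofReal (ENNReal.ofReal s)
      have e : {x | ENNReal.ofReal s ≤ ENNReal.ofReal (f x)} = {x | s ≤ f x} := by
        ext x; exact ENNReal.ofReal_le_ofReal_iff (hf0 x)
      rw [e] at h1
      intro htop
      rw [htop, ENNReal.mul_top (by simpa using hspos)] at h1
      exact absurd (lt_of_le_of_lt h1 hffin) (lt_irrefl _)) hr (fun x hx => hsδ.trans (hb x hx))
  obtain ⟨B, hB⟩ := UpperSemicontinuousOn.bddAbove_of_isCompact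
    (isCompact_closedBall x0 R) (hfusc.upperSemicontinuousOn _)
  set A0 := max B δ with hA0
  have hA0pos : 0 < A0 := lt_max_of_lt_right hδ
  have main : ∀ x, f x ≤ (A0 * Real.exp 1) * Real.exp (-(1 / R) * ‖x - x0‖) := by
    intro x
    rw [mul_assoc, ← Real.exp_add]
    rcases le_or_gt ‖x - x0‖ R with h | h
    · have h1 : f x ≤ A0 := le_max_of_le_left
        (hB (mem_image_of_mem _ (by rwa [Metric.mem_closedBall, dist_eq_norm])))
      refine h1.trans (le_mul_of_one_le_right hA0pos.le (Real.one_le_exp ?_))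
      have : ‖x - x0‖ / R ≤ 1 := (div_le_one hR).2 h
      have e : 1 / R * ‖x - x0‖ = ‖x - x0‖ / R := by ring
      linarith
    · set D := ‖x - x0‖ with hD
      have hDpos : 0 < D := hR.trans h
      have hl1 : R / D ≤ 1 := (div_le_one hDpos).2 h.le
      have hlp : 0 < R / D := by positivity
      have h1 := hflc x0 x (R / D) hlp.le hl1
      have h2 : f ((1 - R / D) • x0 + (R / D) • x) < s := by
        by_contra! hc
        have := hL _ hc
        have e : (1 - R / D) • x0 + (R / D) • x - x0 = (R / D) • (x - x0) := by module
        rw [e, norm_smul, Real.norm_of_nonneg hlp.le, ← hD, div_mul_cancel₀ _ hDpos.ne'] at this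
        exact lt_irrefl _ this
      have h3 : δ ≤ f x0 := hb _ (Metric.mem_ball_self hr)
      have h4 : δ ^ (1 - R / D) * f x ^ (R / D) < δ * Real.exp (-1) := by
        refine lt_of_le_of_lt (le_trans ?_ h1) h2
        have := Real.rpow_le_rpow hδ.le h3 (show 0 ≤ 1 - R / D by linarith)
        exact mul_le_mul_of_nonneg_right this (Real.rpow_nonneg (hf0 x) _)
      have h5 : f x ^ (R / D) < (δ * Real.exp (-(D / R))) ^ (R / D) := by
        rw [Real.mul_rpow hδ.le (Real.exp_pos _).le, ← Real.exp_mul]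
        have e : -(D / R) * (R / D) = -1 := by field_simp
        rw [e]
        rw [Real.rpow_sub hδ, Real.rpow_one] at h4
        have hp : 0 < δ ^ (R / D) := by positivity
        rw [div_mul_eq_mul_div, div_lt_iff₀ hp, mul_assoc, mul_lt_mul_iff_right₀ hδ] at h4
        linarith
      have h6 : f x < δ * Real.exp (-(D / R)) :=
        (Real.rpow_lt_rpow_iff (hf0 x) (by positivity) hlp).1 h5
      refine h6.le.trans ?_
      have hle : Real.exp (-(D / R)) ≤ Real.exp (1 + -(1 / R) * D) := by
        apply Real.exp_le_exp.2
        have e : 1 / R * D = D / R := by ring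
        linarith
      exact mul_le_mul (le_max_right _ _) hle (Real.exp_pos _).le hA0pos.le
  refine ⟨A0 * Real.exp 1 * Real.exp (1 / R * ‖x0‖), 1 / R, by positivity, by positivity,
    fun x => (main x).trans ?_⟩
  rw [mul_assoc _ (Real.exp (1 / R * ‖x0‖)), ← Real.exp_add]
  have : ‖x‖ - ‖x0‖ ≤ ‖x - x0‖ := norm_sub_norm_le _ _
  have h1 : 0 < 1 / R := by positivity
  gcongr
  nlinarith

lemma proj_lip {E : Type*} [NormedAddCommGroup E] [InnerProductSpace ℝ E] {p q x y : E}
    (h1 : ⟪y - x, p - x⟫ ≤ 0) (h2 : ⟪x - y, q - y⟫ ≤ 0) : dist x y ≤ dist p q := by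
  rw [dist_eq_norm, dist_eq_norm]
  have h3 : ⟪x - y, x - y⟫ ≤ ⟪x - y, p - q⟫ := by
    have : ⟪x - y, p - q⟫ - ⟪x - y, x - y⟫ = - ⟪y - x, p - x⟫ - ⟪x - y, q - y⟫ := by
      simp only [inner_sub_left, inner_sub_right]; ring
    linarith
  rw [real_inner_self_eq_norm_sq] at h3
  have h4 := real_inner_le_norm (x - y) (p - q)
  by_contra! hc
  have : 0 < ‖x - y‖ := (norm_nonneg _).trans_lt hc
  nlinarith

/-- A face of the cube. -/
def faceMap {m : ℕ} (i : Fin (m + 1)) (t : ℝ) (z : Fin m → ℝ) : Euc (m + 1) :=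
  WithLp.toLp 2 (i.insertNth (α := fun _ => ℝ) t z)

lemma faceMap_lip (m : ℕ) : ∃ C : ℝ≥0, ∀ (i : Fin (m + 1)) (t : ℝ), LipschitzWith C (faceMap i t) := by
  refine ⟨_, fun i t => (PiLp.lipschitzWith_toLp 2 (fun _ : Fin (m+1) => ℝ)).comp
    (Kg := 1) (LipschitzWith.of_dist_le_mul fun x y => ?_)⟩
  rw [Fin.dist_insertNth_insertNth]
  simp

def cubeBdry (m : ℕ) (R : ℝ) : Set (Euc (m + 1)) :=
  ⋃ i : Fin (m + 1), ((faceMap i R) '' (Icc (fun _ => -R) (fun _ => R)) ∪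
    (faceMap i (-R)) '' (Icc (fun _ => -R) (fun _ => R)))

lemma cubeBdry_measure (m : ℕ) : ∃ C : ℝ≥0∞, C ≠ ⊤ ∧ ∀ R : ℝ, 0 ≤ R →
    (μH[(m : ℝ)] : Measure (Euc (m + 1))) (cubeBdry m R) ≤ C * ENNReal.ofReal R ^ m := by
  obtain ⟨C, hC⟩ := faceMap_lip m
  refine ⟨(m + 1) * (2 * ((C : ℝ≥0∞) ^ m * 2 ^ m)), ?_, fun R hR => ?_⟩
  · finiteness
  have hface : ∀ i t, (μH[(m : ℝ)] : Measure (Euc (m + 1)))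
      ((faceMap i t) '' (Icc (fun _ => -R) (fun _ => R))) ≤
        (C : ℝ≥0∞) ^ m * 2 ^ m * ENNReal.ofReal R ^ m := by
    intro i t
    refine ((hC i t).hausdorffMeasure_image_le (Nat.cast_nonneg m) _).trans ?_
    have e : (μH[(m : ℝ)] : Measure (Fin m → ℝ)) = volume := by
      have := hausdorffMeasure_pi_real (ι := Fin m)
      simpa using this
    rw [e, Real.volume_Icc_pi]
    simp only [Finset.prod_const, Finset.card_univ, Fintype.card_fin]
    rw [ENNReal.rpow_natCast, show R - -R = 2 * R by ring, ENNReal.ofReal_mul (by norm_num),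
      mul_pow, mul_assoc]
    simp
  refine (measure_iUnion_le _).trans ?_
  rw [tsum_fintype]
  calc _ ≤ ∑ i : Fin (m + 1), (2 * ((C : ℝ≥0∞) ^ m * 2 ^ m * ENNReal.ofReal R ^ m)) := by
        refine Finset.sum_le_sum fun i _ => (measure_union_le _ _).trans ?_
        rw [two_mul]
        exact add_le_add (hface _ _) (hface _ _)
    _ = _ := by
        simp only [Finset.sum_const, Finset.card_univ, Fintype.card_fin, nsmul_eq_mul]
        push_cast; ring

lemma mem_cubeBdry {m : ℕ} {R : ℝ} (hR : 0 < R) {p : Euc (m + 1)} (hp : ‖WithLp.ofLp p‖ = R) :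
    p ∈ cubeBdry m R := by
  have h1 : ∀ i, |p i| ≤ R := fun i => by
    rw [← hp]; exact norm_le_pi_norm (WithLp.ofLp p) i
  have h2 : ∃ i, |p i| = R := by
    by_contra! hc
    have : ‖WithLp.ofLp p‖ < R := (pi_norm_lt_iff hR).2 fun i => lt_of_le_of_ne (h1 i) (hc i)
    exact absurd hp this.ne
  obtain ⟨i, hi⟩ := h2
  have key : p = faceMap i (p i) (i.removeNth (α := fun _ => ℝ) (WithLp.ofLp p)) := by
    unfold faceMap
    rw [show p.ofLp i = (WithLp.ofLp p) i from rfl, Fin.insertNth_self_removeNth]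
  have hin : (i.removeNth (α := fun _ => ℝ) (WithLp.ofLp p)) ∈
      Icc (fun _ : Fin m => -R) (fun _ => R) := by
    constructor
    · intro j; exact (abs_le.1 (h1 _)).1
    · intro j; exact (abs_le.1 (h1 _)).2
  refine mem_iUnion.2 ⟨i, ?_⟩
  rcases abs_choice (p i) with h | h
  · left; refine ⟨_, hin, ?_⟩; rw [← hi, h]; exact key.symm
  · right; refine ⟨_, hin, ?_⟩; rw [← hi, h, neg_neg]; exact key.symm

lemma exists_exit {m : ℕ} {R : ℝ} (hR : 0 < R) {x u : Euc (m + 1)} (hx : ‖x‖ ≤ R) (hu : u ≠ 0) :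
    ∃ s : ℝ, 0 ≤ s ∧ x + s • u ∈ cubeBdry m R := by
  obtain ⟨i, hi⟩ : ∃ i, u i ≠ 0 := by
    by_contra! hc
    exact hu (by ext i; simpa using hc i)
  have hxi : ∀ i, |x i| ≤ R := fun i => (PiLp.norm_apply_le x i).trans hx
  set s := 2 * R / |u i| with hs
  have hspos : 0 ≤ s := by positivity
  have hcont : Continuous (fun t : ℝ => ‖WithLp.ofLp (x + t • u)‖) := by fun_prop
  have hiv := intermediate_value_Icc hspos hcont.continuousOn
  have hmem : R ∈ Icc (‖WithLp.ofLp (x + (0:ℝ) • u)‖) (‖WithLp.ofLp (x + s • u)‖) := by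
    constructor
    · rw [pi_norm_le_iff_of_nonneg hR.le]
      intro j; simpa using hxi j
    · have h1 := norm_le_pi_norm (WithLp.ofLp (x + s • u)) i
      refine le_trans ?_ h1
      simp only [WithLp.ofLp_add, WithLp.ofLp_smul, Pi.add_apply, Pi.smul_apply, smul_eq_mul,
        Real.norm_eq_abs]
      have h2 : |s * u i| = 2 * R := by
        rw [abs_mul, abs_of_nonneg hspos, hs, div_mul_cancel₀ _ (abs_ne_zero.2 hi)]
      have h3 := abs_sub_abs_le_abs_sub (s * u i) (-(x i))
      rw [abs_neg, sub_neg_eq_add, h2, add_comm (s * u i)] at h3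
      have := hxi i
      linarith
  obtain ⟨t, ht, hte⟩ := hiv hmem
  exact ⟨t, ht.1, mem_cubeBdry hR hte⟩

lemma exists_normal {n : ℕ} {K : Set (Euc n)} (hK : Convex ℝ K) (hi : (interior K).Nonempty)
    {x : Euc n} (hx : x ∈ frontier K) : ∃ u : Euc n, u ≠ 0 ∧ ∀ y ∈ K, ⟪y - x, u⟫ ≤ 0 := by
  obtain ⟨g, hg⟩ := geometric_hahn_banach_open_point hK.interior isOpen_interior hx.2
  have hrep : ∀ y, g y = ⟪y, (InnerProductSpace.toDual ℝ (Euc n)).symm g⟫ := by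
    intro y
    rw [real_inner_comm, InnerProductSpace.toDual_symm_apply]
  refine ⟨(InnerProductSpace.toDual ℝ (Euc n)).symm g, ?_, ?_⟩
  · intro h0
    obtain ⟨a, ha⟩ := hi
    have := hg a ha
    rw [hrep, hrep, h0] at this
    simp at this
  · intro y hy
    rw [inner_sub_left, ← hrep, ← hrep, sub_nonpos]
    have hyc : y ∈ closure (interior K) := by
      rw [hK.closure_interior_eq_closure_of_nonempty_interior hi]; exact subset_closure hy
    have hcl : IsClosed {z | g z ≤ g x} := isClosed_le g.continuous continuous_const
    exact closure_minimal (fun a ha => (hg a ha).le) hcl hyc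

lemma frontier_measure {m : ℕ} : ∃ C : ℝ≥0∞, C ≠ ⊤ ∧ ∀ K : Set (Euc (m + 1)), Convex ℝ K →
    IsClosed K → (interior K).Nonempty → ∀ R : ℝ, 0 < R →
    (μH[(m : ℝ)] : Measure (Euc (m + 1))) (frontier K ∩ {x | ‖x‖ ≤ R}) ≤
      C * ENNReal.ofReal R ^ m := by
  obtain ⟨C, hC, hCR⟩ := cubeBdry_measure m
  refine ⟨C, hC, fun K hK hKc hi R hR => ?_⟩
  let T : Set (Euc (m + 1)) := {p | ∃ x ∈ K, ∀ y ∈ K, ⟪y - x, p - x⟫ ≤ 0}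
  have hT : ∀ p : Euc (m + 1), ∃ x, p ∈ T → (x ∈ K ∧ ∀ y ∈ K, ⟪y - x, p - x⟫ ≤ 0) := by
    intro p
    by_cases hp : p ∈ T
    · obtain ⟨x, hx⟩ := hp
      exact ⟨x, fun _ => hx⟩
    · exact ⟨0, fun h => absurd h hp⟩
  choose P hP using hT
  have hlip : LipschitzOnWith 1 P (T ∩ cubeBdry m R) := by
    refine LipschitzOnWith.of_dist_le_mul fun p hp q hq => ?_
    rw [NNReal.coe_one, one_mul]
    exact proj_lip ((hP p hp.1).2 _ (hP q hq.1).1) ((hP q hq.1).2 _ (hP p hp.1).1)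
  have hsub : frontier K ∩ {x | ‖x‖ ≤ R} ⊆ P '' (T ∩ cubeBdry m R) := by
    rintro x ⟨hxf, hxR⟩
    obtain ⟨u, hu, hun⟩ := exists_normal hK hi hxf
    obtain ⟨s, hs, hmem⟩ := exists_exit hR hxR hu
    have hxK : x ∈ K := hKc.frontier_subset hxf
    have hx : ∀ y ∈ K, ⟪y - x, (x + s • u) - x⟫ ≤ 0 := by
      intro y hy
      rw [add_sub_cancel_left, inner_smul_right]
      exact mul_nonpos_of_nonneg_of_nonpos hs (hun y hy)
    have hpT : x + s • u ∈ T := ⟨x, hxK, hx⟩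
    refine ⟨x + s • u, ⟨hpT, hmem⟩, ?_⟩
    have h := hP _ hpT
    have := proj_lip (h.2 _ hxK) (hx _ h.1)
    rw [dist_self] at this
    exact dist_le_zero.1 this
  calc _ ≤ _ := measure_mono hsub
    _ ≤ _ := hlip.hausdorffMeasure_image_le (Nat.cast_nonneg m)
    _ ≤ (μH[(m : ℝ)] : Measure (Euc (m + 1))) (cubeBdry m R) := by
        simpa using measure_mono inter_subset_right
    _ ≤ _ := hCR R hR.le

lemma shrink_lower {n : ℕ} {f : Euc n → ℝ} (hflc : LogConcaveFn f) (hf0 : ∀ x, 0 ≤ f x)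
    {x0 x : Euc n} {δ C : ℝ} (hδ : 0 < δ) (hx0 : δ ≤ f x0) (hC : f x ≤ δ * Real.exp C)
    {h : ℝ} (hh : 0 < h) (hh1 : h ≤ 1) :
    0 ≤ (f (x + h • (x0 - x)) - f x) / h + C * f x := by
  rcases (hf0 x).eq_or_lt with h0 | hp
  · rw [← h0]; simp only [sub_zero, mul_zero, add_zero]; exact div_nonneg (hf0 _) hh.le
  have h1 := hflc x x0 h hh.le hh1
  have e : (1 - h) • x + h • x0 = x + h • (x0 - x) := by module
  rw [e] at h1
  have h2 : f x ^ (1 - h) * δ ^ h ≤ f (x + h • (x0 - x)) := by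
    refine le_trans ?_ h1
    gcongr
  have h3 : f x ^ (1 - h) * δ ^ h = f x * Real.exp (h * Real.log (δ / f x)) := by
    rw [Real.rpow_sub hp, Real.rpow_one, Real.log_div hδ.ne' hp.ne', mul_sub, Real.exp_sub,
      mul_comm h, mul_comm h, ← Real.rpow_def_of_pos hδ, ← Real.rpow_def_of_pos hp]
    ring
  have h4 : h * Real.log (δ / f x) + 1 ≤ Real.exp (h * Real.log (δ / f x)) := Real.add_one_le_exp _
  have h5 : -C ≤ Real.log (δ / f x) := by
    rw [Real.le_log_iff_exp_le (by positivity), le_div_iff₀ hp, Real.exp_neg]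
    rw [inv_mul_le_iff₀ (Real.exp_pos _)]; linarith
  rw [h3] at h2
  have h6 : f x * (1 - h * C) ≤ f (x + h • (x0 - x)) := by
    refine le_trans ?_ h2
    gcongr
    nlinarith
  have : -(C * f x) ≤ (f (x + h • (x0 - x)) - f x) / h := by
    rw [le_div_iff₀ hh]; nlinarith
  linarith

lemma mlog_deriv {n : ℕ} {f : Euc n → ℝ} {x : Euc n} (hd : DifferentiableAt ℝ (mlog f) x)
    (v : Euc n) : HasDerivAt (fun t : ℝ => mlog f (x + t • v)) ⟪gradient (mlog f) x, v⟫ 0 := by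
  have h1 := hd.hasGradientAt.hasFDerivAt
  have h2 : HasDerivAt (fun t : ℝ => x + t • v) v 0 := by
    simpa using ((hasDerivAt_id (0:ℝ)).smul_const v).const_add x
  have h3 : HasFDerivAt (mlog f) ((InnerProductSpace.toDual ℝ (Euc n)) (gradient (mlog f) x))
      (x + (0:ℝ) • v) := by simpa using h1
  have := h3.comp_hasDerivAt (0:ℝ) h2
  simpa [Function.comp_def] using this

lemma seg_pos {n : ℕ} {f : Euc n → ℝ} (hflc : LogConcaveFn f) {x y : Euc n} (hx : 0 < f x)
    (hy : 0 < f y) {t : ℝ} (ht : 0 ≤ t) (ht1 : t ≤ 1) : 0 < f (x + t • (y - x)) := by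
  have := hflc.convex_pos (show x ∈ {x | 0 < f x} from hx) hy (sub_nonneg.2 ht1) ht (by ring)
  have e : (1 - t) • x + t • y = x + t • (y - x) := by module
  rw [e] at this
  exact this

lemma grad_ineq {n : ℕ} {f : Euc n → ℝ} (hflc : LogConcaveFn f) {x y : Euc n}
    (hx : 0 < f x) (hy : 0 < f y) (hd : DifferentiableAt ℝ (mlog f) x) :
    ⟪gradient (mlog f) x, y - x⟫ ≤ mlog f y - mlog f x := by
  have h1 := (mlog_deriv hd (y - x)).hasDerivWithinAt (s := Ioi 0)
  rw [hasDerivWithinAt_iff_tendsto_slope' (by simp)] at h1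
  refine le_of_tendsto h1 ?_
  filter_upwards [Ioo_mem_nhdsGT (show (0:ℝ) < 1 by norm_num)] with t ht
  rw [slope_def_field, sub_zero, div_le_iff₀ ht.1]
  simp only [zero_smul, add_zero]
  have h2 := hflc x y t ht.1.le ht.2.le
  have e : (1 - t) • x + t • y = x + t • (y - x) := by module
  rw [e] at h2
  have h3 := Real.log_le_log (by positivity) h2
  rw [Real.log_mul (by positivity) (by positivity), Real.log_rpow hx, Real.log_rpow hy] at h3
  unfold mlog
  linarith

lemma grad_bound {n : ℕ} {f : Euc n → ℝ} (hflc : LogConcaveFn f) {x0 x : Euc n} {r δ C : ℝ}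
    (hr : 0 < r) (hδ : 0 < δ) (hb : ∀ x ∈ Metric.ball x0 r, δ ≤ f x) (hC : f x ≤ δ * Real.exp C)
    (hx : 0 < f x) (hd : DifferentiableAt ℝ (mlog f) x) :
    (r / 2) * ‖gradient (mlog f) x‖ ≤ C - ⟪gradient (mlog f) x, x0 - x⟫ := by
  set g := gradient (mlog f) x with hg
  set y := x0 + ((r / 2) * ‖g‖⁻¹) • g with hy
  have hyb : y ∈ Metric.ball x0 r := by
    rw [Metric.mem_ball, dist_eq_norm, hy, add_sub_cancel_left, norm_smul,
      Real.norm_of_nonneg (by positivity), mul_assoc]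
    have : ‖g‖⁻¹ * ‖g‖ ≤ 1 := inv_mul_le_one
    nlinarith
  have hyδ := hb y hyb
  have h1 := grad_ineq hflc hx (hδ.trans_le hyδ) hd
  have e : ⟪g, y - x⟫ = (r / 2) * ‖g‖ + ⟪g, x0 - x⟫ := by
    rw [hy, show x0 + ((r / 2) * ‖g‖⁻¹) • g - x = ((r / 2) * ‖g‖⁻¹) • g + (x0 - x) by abel,
      inner_add_right, inner_smul_right, real_inner_self_eq_norm_sq]
    congr 1
    by_cases h0 : ‖g‖ = 0
    · simp [h0]
    · field_simp
  rw [← hg, e] at h1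
  have h2 : mlog f y - mlog f x ≤ C := by
    unfold mlog
    have a1 := Real.log_le_log hδ hyδ
    have a2 := Real.log_le_log hx hC
    rw [Real.log_mul hδ.ne' (Real.exp_pos _).ne', Real.log_exp] at a2
    linarith
  linarith

lemma diffquot_tendsto {n : ℕ} {f : Euc n → ℝ} (hflc : LogConcaveFn f) {x0 x : Euc n}
    (hx : 0 < f x) (hx0 : 0 < f x0) (hd : DifferentiableAt ℝ (mlog f) x) :
    Tendsto (fun h : ℝ => (f (x + h • (x0 - x)) - f x) / h) (𝓝[>] 0)
      (𝓝 (-(f x * ⟪gradient (mlog f) x, x0 - x⟫))) := by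
  have h1 := ((mlog_deriv hd (x0 - x)).neg.exp).hasDerivWithinAt (s := Ioi 0)
  rw [hasDerivWithinAt_iff_tendsto_slope' (by simp)] at h1
  have e : Real.exp (-mlog f x) = f x := by
    unfold mlog; rw [neg_neg, Real.exp_log hx]
  have h2 : Tendsto (slope (fun t : ℝ => Real.exp (-mlog f (x + t • (x0 - x)))) 0) (𝓝[>] 0)
      (𝓝 (-(f x * ⟪gradient (mlog f) x, x0 - x⟫))) := by
    have e2 : Real.exp (-mlog f (x + (0:ℝ) • (x0 - x))) * -⟪gradient (mlog f) x, x0 - x⟫ =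
        -(f x * ⟪gradient (mlog f) x, x0 - x⟫) := by
      rw [zero_smul, add_zero, e]; ring
    rw [← e2]
    exact h1
  refine h2.congr' ?_
  filter_upwards [Ioo_mem_nhdsGT (show (0:ℝ) < 1 by norm_num)] with t ht
  rw [slope_def_field, sub_zero]
  simp only [zero_smul, add_zero]
  rw [e]
  unfold mlog
  rw [neg_neg, Real.exp_log (seg_pos hflc hx hx0 ht.1.le ht.2.le)]

lemma grad_integral {n : ℕ} (f : Euc n → ℝ) (hf0 : ∀ x, 0 ≤ f x) (hm : Measurable f)
    (hflc : LogConcaveFn f) (hffin : totalMass f < ⊤) {x0 : Euc n} {r δ A : ℝ} (hr : 0 < r)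
    (hδ : 0 < δ) (hb : ∀ x ∈ Metric.ball x0 r, δ ≤ f x) (hA : ∀ x, f x ≤ A) :
    ∫⁻ x, ENNReal.ofReal (f x) * (‖gradient (mlog f) x‖₊ : ℝ≥0∞) < ⊤ := by
  have hx0 : δ ≤ f x0 := hb _ (Metric.mem_ball_self hr)
  have hApos : 0 < A := hδ.trans_le (hx0.trans (hA x0))
  set C := Real.log (A / δ) with hCdef
  have hC : ∀ x, f x ≤ δ * Real.exp C := fun x => by
    rw [hCdef, Real.exp_log (by positivity), mul_div_cancel₀ _ hδ.ne']; exact hA x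
  have hint : Integrable f := by
    refine ⟨hm.aestronglyMeasurable, ?_⟩
    rw [hasFiniteIntegral_iff_ofReal (ae_of_all _ hf0)]
    exact hffin
  let hk : ℕ → ℝ := fun k => 1 / ((k : ℝ) + 2)
  have hkpos : ∀ k, 0 < hk k := fun k => by simp only [hk]; positivity
  have hk1 : ∀ k, hk k < 1 := fun k => by
    simp only [hk]; rw [div_lt_one (by positivity)]; have := Nat.cast_nonneg (α := ℝ) k; linarith
  have hkt : Tendsto hk atTop (𝓝[>] 0) := by
    rw [tendsto_nhdsWithin_iff]
    refine ⟨?_, Eventually.of_forall hkpos⟩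
    have := (tendsto_const_nhds (x := (1:ℝ))).div_atTop
      (tendsto_atTop_add_const_right _ (2:ℝ) (tendsto_natCast_atTop_atTop (R := ℝ)))
    exact this
  let F : ℕ → Euc n → ℝ := fun k x => (f (x + hk k • (x0 - x)) - f x) / hk k + C * f x
  have hFmeas : ∀ k, Measurable (F k) := fun k => by
    have : Measurable (fun x : Euc n => x + hk k • (x0 - x)) := by fun_prop
    have := hm.comp this
    exact ((this.sub hm).div_const _).add (hm.const_mul _)
  have hpt : ∀ x, ENNReal.ofReal (r / 2) * (ENNReal.ofReal (f x) * (‖gradient (mlog f) x‖₊ : ℝ≥0∞)) ≤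
      liminf (fun k => ENNReal.ofReal (F k x)) atTop := by
    intro x
    rcases (hf0 x).eq_or_lt with h0 | hp
    · simp [← h0]
    by_cases hd : DifferentiableAt ℝ (mlog f) x
    · have ht := ((diffquot_tendsto hflc hp (hδ.trans_le hx0) hd).comp hkt).add_const (C * f x)
      have ht2 := (ENNReal.continuous_ofReal.tendsto _).comp ht
      have := ht2.liminf_eq
      simp only [Function.comp_def] at this
      simp only [F]
      rw [this, ← enorm_eq_nnnorm, ← ofReal_norm, ← ENNReal.ofReal_mul (hf0 x), ← ENNReal.ofReal_mul (by positivity)]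
      apply ENNReal.ofReal_le_ofReal
      have := mul_le_mul_of_nonneg_left (grad_bound hflc hr hδ hb (hC x) hp hd) hp.le
      linarith
    · have : gradient (mlog f) x = 0 := gradient_eq_zero_of_not_differentiableAt hd
      simp [this]
  have hcomp : ∀ k, Integrable (fun x => f (x + hk k • (x0 - x))) ∧
      ∫ x, f (x + hk k • (x0 - x)) = ((1 - hk k) ^ n)⁻¹ * ∫ x, f x := by
    intro k
    have hl : 0 < 1 - hk k := by have := hk1 k; linarith
    have e : (fun x => f (x + hk k • (x0 - x))) =
        fun x => (fun z => f (z + hk k • x0)) ((1 - hk k) • x) := by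
      ext x; congr 1; module
    rw [e]
    constructor
    · exact (hint.comp_add_right (hk k • x0)).comp_smul hl.ne'
    · rw [Measure.integral_comp_smul_of_nonneg volume (fun z => f (z + hk k • x0)) _ (hR := hl.le),
        integral_add_right_eq_self (fun z => f z)]
      simp
  have hFint : ∀ k, ∫⁻ x, ENNReal.ofReal (F k x) =
      ENNReal.ofReal (((((1 - hk k) ^ n)⁻¹ - 1) / hk k) * (∫ x, f x) + C * ∫ x, f x) := by
    intro k
    have i1 : Integrable (fun x => (f (x + hk k • (x0 - x)) - f x) / hk k) :=
      ((hcomp k).1.sub hint).div_const _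
    have i2 : Integrable (F k) := i1.add (hint.const_mul C)
    rw [← ofReal_integral_eq_lintegral_ofReal i2
      (ae_of_all _ fun x => shrink_lower hflc hf0 hδ hx0 (hC x) (hkpos k) (hk1 k).le)]
    congr 1
    simp only [F]
    rw [integral_add i1 (hint.const_mul C), integral_div, integral_sub (hcomp k).1 hint,
      integral_const_mul, (hcomp k).2]
    ring
  have hlim : ∃ c, Tendsto (fun k => (((1 - hk k) ^ n)⁻¹ - 1) / hk k) atTop (𝓝 c) := by
    have hD : DifferentiableAt ℝ (fun t : ℝ => ((1 - t) ^ n)⁻¹) 0 := by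
      apply DifferentiableAt.inv (by fun_prop); simp
    have h1 := hD.hasDerivAt.hasDerivWithinAt (s := Ioi 0)
    rw [hasDerivWithinAt_iff_tendsto_slope' (by simp)] at h1
    refine ⟨_, (h1.comp hkt).congr fun k => ?_⟩
    simp [slope_def_field]
  obtain ⟨c, hc⟩ := hlim
  have hfin : ENNReal.ofReal (r / 2) *
      ∫⁻ x, (ENNReal.ofReal (f x) * (‖gradient (mlog f) x‖₊ : ℝ≥0∞)) < ⊤ := by
    rw [← lintegral_const_mul' _ _ ENNReal.ofReal_ne_top]
    calc _ ≤ ∫⁻ x, liminf (fun k => ENNReal.ofReal (F k x)) atTop := lintegral_mono hpt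
      _ ≤ liminf (fun k => ∫⁻ x, ENNReal.ofReal (F k x)) atTop :=
          lintegral_liminf_le fun k => (hFmeas k).ennreal_ofReal
      _ = ENNReal.ofReal (c * (∫ x, f x) + C * ∫ x, f x) := by
          simp_rw [hFint]
          exact ((ENNReal.continuous_ofReal.tendsto _).comp
            ((hc.mul_const _).add_const _)).liminf_eq
      _ < ⊤ := ENNReal.ofReal_lt_top
  by_contra! htop
  rw [top_le_iff] at htop
  rw [htop, ENNReal.mul_top (by simpa using hr)] at hfin
  exact lt_irrefl _ hfin

lemma bdry_integral {m : ℕ} (f : Euc (m + 1) → ℝ) (hflc : LogConcaveFn f)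
    (hi : (interior (spt f)).Nonempty) {A c : ℝ} (hA : 0 < A) (hc : 0 < c)
    (hdec : ∀ x, f x ≤ A * Real.exp (-c * ‖x‖)) :
    (∫⁻ x in frontier (spt f), ENNReal.ofReal (f x)
        ∂(μH[(m : ℝ)] : Measure (Euc (m + 1)))) < ⊤ := by
  obtain ⟨C, hC, hCR⟩ := frontier_measure (m := m)
  have hconv : Convex ℝ (spt f) := hflc.convex_pos.closure
  have hcl : IsClosed (spt f) := isClosed_closure
  let S : ℕ → Set (Euc (m + 1)) := fun k =>
    frontier (spt f) ∩ {x | (k : ℝ) ≤ ‖x‖ ∧ ‖x‖ ≤ (k : ℝ) + 1}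
  have hS : frontier (spt f) ⊆ ⋃ k, S k := by
    intro x hx
    exact mem_iUnion.2 ⟨⌊‖x‖⌋₊, hx, Nat.floor_le (norm_nonneg _), (Nat.lt_floor_add_one _).le⟩
  have hSm : ∀ k, MeasurableSet (S k) := fun k => by
    refine isClosed_frontier.measurableSet.inter (MeasurableSet.inter ?_ ?_)
    · exact measurableSet_le measurable_const measurable_norm
    · exact measurableSet_le measurable_norm measurable_const
  have hterm : ∀ k, (∫⁻ x in S k, ENNReal.ofReal (f x) ∂(μH[(m : ℝ)] : Measure (Euc (m + 1)))) ≤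
      C * ENNReal.ofReal (A * (((k : ℝ) + 1) ^ m * Real.exp (-c * k))) := by
    intro k
    calc _ ≤ ∫⁻ x in S k, ENNReal.ofReal (A * Real.exp (-c * k))
            ∂(μH[(m : ℝ)] : Measure (Euc (m + 1))) := by
          refine setLIntegral_mono' (hSm k) fun x hx => ENNReal.ofReal_le_ofReal ?_
          refine (hdec x).trans ?_
          have := hx.2.1
          gcongr A * Real.exp ?_
          nlinarith
      _ = ENNReal.ofReal (A * Real.exp (-c * k)) * (μH[(m : ℝ)] : Measure (Euc (m + 1))) (S k) := by
          rw [setLIntegral_const]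
      _ ≤ ENNReal.ofReal (A * Real.exp (-c * k)) * (C * ENNReal.ofReal ((k : ℝ) + 1) ^ m) := by
          gcongr
          refine (measure_mono ?_).trans (hCR _ hconv hcl hi _ (by positivity))
          exact fun x hx => ⟨hx.1, hx.2.2⟩
      _ = _ := by
          rw [← ENNReal.ofReal_pow (by positivity), mul_left_comm,
            ← ENNReal.ofReal_mul (by positivity)]
          congr 2; ring
  have hsum : Summable (fun k : ℕ => A * (((k : ℝ) + 1) ^ m * Real.exp (-c * k))) := by
    apply Summable.mul_left
    have h1 := (summable_nat_add_iff 1).2 (Real.summable_pow_mul_exp_neg_nat_mul m hc)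
    refine (h1.mul_left (Real.exp c)).congr fun k => ?_
    push_cast
    rw [mul_left_comm, ← Real.exp_add]
    congr 2; ring
  calc _ ≤ ∫⁻ x in ⋃ k, S k, ENNReal.ofReal (f x) ∂(μH[(m : ℝ)] : Measure (Euc (m + 1))) :=
        lintegral_mono_set hS
    _ ≤ ∑' k, ∫⁻ x in S k, ENNReal.ofReal (f x) ∂(μH[(m : ℝ)] : Measure (Euc (m + 1))) :=
        lintegral_iUnion_le _ _
    _ ≤ ∑' k : ℕ, C * ENNReal.ofReal (A * (((k : ℝ) + 1) ^ m * Real.exp (-c * k))) :=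
        ENNReal.tsum_le_tsum hterm
    _ < ⊤ := by
        rw [ENNReal.tsum_mul_left, ← ENNReal.ofReal_tsum_of_nonneg (fun k => by positivity) hsum]
        exact ENNReal.mul_lt_top hC.lt_top ENNReal.ofReal_lt_top

lemma isFiniteMeasure_map_any {α β : Type*} [MeasurableSpace α] [MeasurableSpace β]
    (μ : Measure α) [IsFiniteMeasure μ] (g : α → β) : IsFiniteMeasure (Measure.map g μ) :=
  inferInstance

/-- For upper semicontinuous log-concave `f` with `0 < ∫ f < ∞`,
the measure `μ_f` is finite with finite first moment, and `ν_f` is finite,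
i.e. `∫_{∂K_f} f dH^{n-1} < ∞`. -/
theorem surface_measures_finite (n : ℕ) (f : Euc n → ℝ)
    (hf0 : ∀ x, 0 ≤ f x) (hfusc : UpperSemicontinuous f) (hflc : LogConcaveFn f)
    (hfpos : 0 < totalMass f) (hffin : totalMass f < ⊤) :
    IsFiniteMeasure (muF f) ∧
    (∫⁻ x, (‖x‖₊ : ℝ≥0∞) ∂(muF f)) < ⊤ ∧
    IsFiniteMeasure (nuF f) ∧
    (∫⁻ x in frontier (spt f), ENNReal.ofReal (f x)
        ∂(μH[(n : ℝ) - 1] : Measure (Euc n))) < ⊤ := by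

  obtain ⟨x0, r, δ, hr, hδ, hb⟩ := exists_ball_ge f hflc hfpos
  obtain ⟨A, c, hA, hc, hdec⟩ := decay f hf0 hfusc hflc hffin hr hδ hb
  have hm : Measurable f := hfusc.measurable
  have hfA : ∀ x, f x ≤ A := fun x => (hdec x).trans
    (mul_le_of_le_one_right hA.le (Real.exp_le_one_iff.2 (by
      have := norm_nonneg x
      nlinarith)))
  have hfin1 : IsFiniteMeasure ((volume : Measure (Euc n)).withDensity
      fun x => ENNReal.ofReal (f x)) := isFiniteMeasure_withDensity hffin.ne
  have hbd : (∫⁻ x in frontier (spt f), ENNReal.ofReal (f x)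
        ∂(μH[(n : ℝ) - 1] : Measure (Euc n))) < ⊤ := by
    rcases n with _ | m
    · have : frontier (spt f) = ∅ := by
        rcases (spt f).eq_empty_or_nonempty with h | h
        · simp [h]
        · rw [Subsingleton.eq_univ_of_nonempty h]; simp
      rw [this]; simp
    · have e : (((m + 1 : ℕ) : ℝ) - 1) = (m : ℝ) := by push_cast; ring
      rw [e]
      refine bdry_integral f hflc ⟨x0, ?_⟩ hA hc hdec
      rw [mem_interior]
      exact ⟨Metric.ball x0 r, fun x hx => subset_closure (hδ.trans_le (hb x hx)),
        Metric.isOpen_ball, Metric.mem_ball_self hr⟩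
  have hfin2 : IsFiniteMeasure (bdryMeasure f) := isFiniteMeasure_withDensity hbd.ne
  refine ⟨?_, ?_, ?_, hbd⟩
  · unfold muF; exact isFiniteMeasure_map_any _ _
  · unfold muF
    refine (lintegral_map_le _ _).trans_lt ?_
    rw [lintegral_withDensity_eq_lintegral_mul_non_measurable _ hm.ennreal_ofReal
      (ae_of_all _ fun x => ENNReal.ofReal_lt_top)]
    exact grad_integral f hf0 hm hflc hffin hr hδ hb hfA
  · unfold nuF; exact isFiniteMeasure_map_any _ _

end
end

section
/- Let f : ℝⁿ → [0,∞) be upper semicontinuous and log-concave with 0 < ∫_{ℝⁿ} f dx < ∞, and let L ⊂ ℝⁿ be a compact convex body. For s > 0 write F_s = {x ∈ ℝⁿ : f(x) ≥ s}. Then δ(f, 1_L) = n ∫_0^∞ W₁(F_s, L) ds, where 1_L is the indicator function of L. -/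
open MeasureTheory Set Filter Topology Pointwise
open scoped ENNReal RealInnerProductSpace NNReal

noncomputable section

lemma superlevel_isClosed_aux {n : ℕ} {f : Euc n → ℝ} (hfusc : UpperSemicontinuous f) (s : ℝ) :
    IsClosed {x | s ≤ f x} := hfusc.isClosed_preimage s

lemma superlevel_convex_aux {n : ℕ} {f : Euc n → ℝ} (hflc : LogConcaveFn f) {s : ℝ} (hs : 0 < s) :
    Convex ℝ {x | s ≤ f x} := by
  intro x hx y hy a b ha hb hab
  have hx' : s ≤ f x := hx
  have hy' : s ≤ f y := hy
  have h := hflc x y b hb (by linarith)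
  have ha' : 1 - b = a := by linarith
  rw [ha'] at h
  have h1 : s ^ a * s ^ b ≤ f x ^ a * f y ^ b := by
    have : 0 ≤ f x := hs.le.trans hx'
    gcongr
  rw [← Real.rpow_add hs, hab, Real.rpow_one] at h1
  exact h1.trans h

/-- There is a ball on which `f` is bounded below by a positive constant. -/
lemma exists_ball_aux {n : ℕ} {f : Euc n → ℝ} (hfusc : UpperSemicontinuous f)
    (hflc : LogConcaveFn f) (hfpos : 0 < totalMass f) :
    ∃ m : ℝ, 0 < m ∧ ∃ x₀ : Euc n, ∃ r : ℝ, 0 < r ∧ ∀ w : Euc n, ‖w‖ ≤ r → m ≤ f (x₀ + w) := by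
  by_cases hint : ∃ k : ℕ, (interior {x | (1 / ((k : ℝ) + 1)) ≤ f x}).Nonempty
  · obtain ⟨k, x₀, hx₀⟩ := hint
    obtain ⟨r, hr, hball⟩ := Metric.mem_nhds_iff.1 (mem_interior_iff_mem_nhds.1 hx₀)
    refine ⟨1 / ((k : ℝ) + 1), by positivity, x₀, r / 2, by positivity, fun w hw => ?_⟩
    apply hball
    simp only [Metric.mem_ball, dist_self_add_left]
    linarith
  · exfalso
    push Not at hint
    have hnull : ∀ k : ℕ, volume {x | (1 / ((k : ℝ) + 1)) ≤ f x} = 0 := by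
      intro k
      have hc := superlevel_isClosed_aux hfusc (1 / ((k : ℝ) + 1))
      have := (superlevel_convex_aux hflc (s := 1 / ((k : ℝ) + 1)) (by positivity)).addHaar_frontier
        volume
      rwa [hc.frontier_eq, hint k, sdiff_empty] at this
    have hU := measure_iUnion_null hnull
    apply hfpos.ne'
    unfold totalMass
    rw [lintegral_eq_zero_iff hfusc.measurable.ennreal_ofReal]
    rw [Filter.EventuallyEq, ae_iff]
    refine measure_mono_null ?_ hU
    intro x hx
    simp only [Pi.zero_apply, ENNReal.ofReal_eq_zero, not_le, mem_ofPred_eq] at hx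
    obtain ⟨k, hk⟩ := exists_nat_one_div_lt hx
    exact mem_iUnion.2 ⟨k, hk.le⟩

/-- An integrable log-concave function with positive mass is bounded. -/
lemma bounded_aux {n : ℕ} {f : Euc n → ℝ} (hf0 : ∀ x, 0 ≤ f x) (hfusc : UpperSemicontinuous f)
    (hflc : LogConcaveFn f) (hffin : totalMass f < ⊤)
    {m : ℝ} (hm : 0 < m) {x₀ : Euc n} {r : ℝ} (hr : 0 < r)
    (hball : ∀ w : Euc n, ‖w‖ ≤ r → m ≤ f (x₀ + w)) :
    ∃ M : ℝ, 0 < M ∧ ∀ x, f x ≤ M := by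
  set v : ℝ := (volume (Metric.ball (0 : Euc n) (r / 2))).toReal with hv
  have hvpos : 0 < v :=
    ENNReal.toReal_pos (Metric.measure_ball_pos _ _ (by positivity)).ne' measure_ball_lt_top.ne
  have key : ∀ y, Real.sqrt (f y * m) * v ≤ (totalMass f).toReal := by
    intro y
    set e := Real.sqrt (f y * m) with he
    have hsub : Metric.ball ((1 / 2 : ℝ) • (y + x₀)) (r / 2) ⊆
        {x | ENNReal.ofReal e ≤ ENNReal.ofReal (f x)} := by
      intro x hx
      apply ENNReal.ofReal_le_ofReal
      set w : Euc n := (2 : ℝ) • (x - (1 / 2 : ℝ) • (y + x₀)) with hw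
      have hwr : ‖w‖ ≤ r := by
        rw [hw, norm_smul]
        rw [Metric.mem_ball, dist_eq_norm] at hx
        simp only [Real.norm_ofNat]
        linarith
      have h1 := hflc y (x₀ + w) (1 / 2) (by norm_num) (by norm_num)
      have h2 : ((1 - 1 / 2 : ℝ) • y + (1 / 2 : ℝ) • (x₀ + w)) = x := by
        rw [hw]; module
      rw [h2] at h1
      have h3 : e = f y ^ (1 - 1 / 2 : ℝ) * m ^ (1 / 2 : ℝ) := by
        rw [he, Real.sqrt_mul (hf0 y), Real.sqrt_eq_rpow, Real.sqrt_eq_rpow]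
        norm_num
      rw [h3]
      refine le_trans ?_ h1
      have := hball w hwr
      have := hf0 y
      gcongr
    have h4 := mul_meas_ge_le_lintegral (μ := volume) hfusc.measurable.ennreal_ofReal
      (ENNReal.ofReal e)
    have h5 : ENNReal.ofReal e * volume (Metric.ball (0 : Euc n) (r / 2)) ≤ totalMass f := by
      refine le_trans ?_ h4
      rw [← Measure.addHaar_ball_center volume ((1 / 2 : ℝ) • (y + x₀))]
      exact mul_le_mul_right (measure_mono hsub) _
    have h6 := ENNReal.toReal_mono hffin.ne h5
    rwa [ENNReal.toReal_mul, ENNReal.toReal_ofReal (Real.sqrt_nonneg _)] at h6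
  set T := (totalMass f).toReal
  refine ⟨(T / v) ^ 2 / m + 1, by positivity, fun y => ?_⟩
  have h1 : Real.sqrt (f y * m) ≤ T / v := by
    rw [le_div_iff₀ hvpos]; exact key y
  have h2 : f y * m ≤ (T / v) ^ 2 := by
    rw [← Real.sq_sqrt (mul_nonneg (hf0 y) hm.le)]
    gcongr
  have h3 : f y ≤ (T / v) ^ 2 / m := by rwa [le_div_iff₀ hm]
  linarith

/-- Pointwise control of `f` by a dilate. -/
lemma pointwise_aux {n : ℕ} {f : Euc n → ℝ} (hf0 : ∀ x, 0 ≤ f x)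
    (hflc : LogConcaveFn f)
    {m : ℝ} (hm : 0 < m) {x₀ : Euc n} {r : ℝ} (hr : 0 < r)
    (hball : ∀ w : Euc n, ‖w‖ ≤ r → m ≤ f (x₀ + w))
    {M : ℝ} (hM : 0 < M) (hfM : ∀ x, f x ≤ M) {R : ℝ} (hR : 0 < R) :
    ∃ C a : ℝ, a ≠ 0 ∧ ∃ b : Euc n, ∀ x k : Euc n, ‖k‖ ≤ R →
      f (x - k) ≤ C * f (a • (x + b)) := by
  set c : ℝ := R / r with hc
  have hcpos : 0 < c := by positivity
  set l : ℝ := c / (1 + c) with hl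
  have hl0 : 0 ≤ l := by positivity
  have hl1 : l ≤ 1 := by rw [hl, div_le_one (by positivity)]; linarith
  have hl' : 1 - l = 1 / (1 + c) := by rw [hl]; field_simp; ring
  have hlc : l * c⁻¹ = 1 / (1 + c) := by rw [hl]; field_simp
  have hl2 : l = (1 / (1 + c)) * c := by rw [hl]; ring
  refine ⟨(M / m) ^ l, 1 / (1 + c), by positivity, c • x₀, fun x k hk => ?_⟩
  have h1 := hflc (x - k) (x₀ + c⁻¹ • k) l hl0 hl1
  have h2 : ((1 - l) • (x - k) + l • (x₀ + c⁻¹ • k)) = (1 / (1 + c)) • (x + c • x₀) := by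
    rw [smul_add l, smul_smul, hlc, hl', hl2]; module
  rw [h2] at h1
  have hw : ‖c⁻¹ • k‖ ≤ r := by
    rw [norm_smul, norm_inv, Real.norm_of_nonneg hcpos.le, inv_mul_le_iff₀ hcpos, hc]
    rwa [div_mul_cancel₀ _ hr.ne']
  have hb := hball _ hw
  rcases (hf0 (x - k)).eq_or_lt with h0 | h0
  · rw [← h0]
    exact mul_nonneg (by positivity) (hf0 _)
  set p := f (x - k) with hp
  have hpM : p ≤ M := hfM _
  have h3 : p ^ (1 - l) * m ^ l ≤ f ((1 / (1 + c)) • (x + c • x₀)) := by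
    refine le_trans ?_ h1
    gcongr
  calc p = p ^ l * p ^ (1 - l) := by
        rw [← Real.rpow_add h0]; simp
    _ ≤ M ^ l * p ^ (1 - l) := by gcongr
    _ = (M / m) ^ l * (p ^ (1 - l) * m ^ l) := by
        rw [Real.div_rpow hM.le hm.le]
        have : 0 < m ^ l := by positivity
        field_simp
    _ ≤ _ := by gcongr

/-- Layer cake for `sup_{k ∈ K} f (x - k)`. -/
lemma layer_aux {n : ℕ} {f : Euc n → ℝ} (hf0 : ∀ x, 0 ≤ f x)
    (hfusc : UpperSemicontinuous f) (hflc : LogConcaveFn f)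
    (hfpos : 0 < totalMass f) (hffin : totalMass f < ⊤)
    {K : Set (Euc n)} (hK : IsCompact K) (hKne : K.Nonempty) :
    ∃ h : Euc n → ℝ, (∀ x, ∃ k ∈ K, h x = f (x - k)) ∧ (∀ x, ∀ k ∈ K, f (x - k) ≤ h x) ∧
      ∫⁻ x, ENNReal.ofReal (h x) = ∫⁻ s in Ioi (0 : ℝ), volume ({x | s ≤ f x} + K) ∧
      ∫⁻ x, ENNReal.ofReal (h x) < ⊤ := by
  have hmax : ∀ x, ∃ k ∈ K, ∀ k' ∈ K, f (x - k') ≤ f (x - k) := by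
    intro x
    have hu : UpperSemicontinuous fun k => f (x - k) :=
      hfusc.comp (continuous_const.sub continuous_id)
    obtain ⟨k, hk, hkm⟩ := (hu.upperSemicontinuousOn K).exists_isMaxOn hKne hK
    exact ⟨k, hk, fun k' hk' => hkm hk'⟩
  choose κ hκ hκm using hmax
  have hset : ∀ s : ℝ, {x | s ≤ f (x - κ x)} = {x | s ≤ f x} + K := by
    intro s
    ext x
    constructor
    · intro hx
      exact ⟨x - κ x, hx, κ x, hκ x, by simp⟩
    · rintro ⟨y, hy, k, hk, rfl⟩
      have := hκm (y + k) k hk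
      simp only [add_sub_cancel_right] at this
      exact le_trans hy this
  have hmeas : Measurable fun x => f (x - κ x) := by
    apply measurable_of_Ici
    intro s
    have : (fun x => f (x - κ x)) ⁻¹' Ici s = {x | s ≤ f x} + K := hset s
    rw [this]
    exact ((superlevel_isClosed_aux hfusc s).add_right_of_isCompact hK).measurableSet
  refine ⟨fun x => f (x - κ x), fun x => ⟨κ x, hκ x, rfl⟩, hκm, ?_, ?_⟩
  · rw [lintegral_eq_lintegral_meas_le volume (ae_of_all _ fun x => hf0 _) hmeas.aemeasurable]
    simp_rw [hset]
  · obtain ⟨m, hm, x₀, r, hr, hball⟩ := exists_ball_aux hfusc hflc hfpos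
    obtain ⟨M, hM, hfM⟩ := bounded_aux hf0 hfusc hflc hffin hm hr hball
    obtain ⟨R, hR, hKR⟩ := hK.isBounded.exists_pos_norm_le
    obtain ⟨C, a, ha, b, hC⟩ := pointwise_aux hf0 hflc hm hr hball hM hfM hR
    have hint : Integrable f volume := by
      refine ⟨hfusc.measurable.aestronglyMeasurable, ?_⟩
      rw [hasFiniteIntegral_iff_ofReal (ae_of_all _ hf0)]
      exact hffin
    have hint2 : Integrable (fun x => C * f (a • (x + b))) volume :=
      ((hint.comp_smul ha).comp_add_right b).const_mul C
    have h1 := hint2.lintegral_lt_top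
    refine lt_of_le_of_lt (lintegral_mono fun x => ?_) h1
    exact ENNReal.ofReal_le_ofReal (hC x _ (hKR _ (hκ x)))

lemma supConv_aux {n : ℕ} {f : Euc n → ℝ} (hf0 : ∀ x, 0 ≤ f x) {L : Set (Euc n)} {t : ℝ}
    (ht : 0 < t) {h : Euc n → ℝ} (h1 : ∀ x, ∃ k ∈ t • L, h x = f (x - k))
    (h2 : ∀ x, ∀ k ∈ t • L, f (x - k) ≤ h x) (x : Euc n) :
    supConv f (dil t (L.indicator fun _ => (1 : ℝ))) x = ENNReal.ofReal (h x) := by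
  unfold supConv dil
  apply le_antisymm
  · refine iSup_le fun y => ENNReal.ofReal_le_ofReal ?_
    by_cases hy : t⁻¹ • (x - y) ∈ L
    · rw [indicator_of_mem hy, Real.one_rpow, mul_one]
      have := h2 x (x - y) ((mem_smul_set_iff_inv_smul_mem₀ ht.ne' _ _).2 hy)
      simpa using this
    · rw [indicator_of_notMem hy, Real.zero_rpow ht.ne', mul_zero]
      obtain ⟨k, -, hk⟩ := h1 x
      rw [hk]; exact hf0 _
  · obtain ⟨k, hk, hkx⟩ := h1 x
    refine le_iSup_of_le (x - k) ?_
    rw [mem_smul_set_iff_inv_smul_mem₀ ht.ne'] at hk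
    rw [hkx, sub_sub_cancel, indicator_of_mem hk, Real.one_rpow, mul_one]

/-- `δ(f, 1_L) = n ∫_0^∞ W₁(F_s, L) ds`, where the relative
quermassintegrals `W_k(F_s, L)` are the coefficients of the Minkowski–Steiner
polynomial `|F_s + tL| = Σ_k (n choose k) W_k(F_s,L) t^k`. -/
theorem delta_indicator_quermassintegral (n : ℕ) (f : Euc n → ℝ)
    (hf0 : ∀ x, 0 ≤ f x) (hfusc : UpperSemicontinuous f) (hflc : LogConcaveFn f)
    (hfpos : 0 < totalMass f) (hffin : totalMass f < ⊤)
    (L : Set (Euc n)) (hLcomp : IsCompact L) (hLconv : Convex ℝ L)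
    (hLint : (interior L).Nonempty)
    (W : ℝ → Fin (n + 1) → ℝ)
    (hW : ∀ s : ℝ, 0 < s → ∀ t : ℝ, 0 ≤ t →
      (volume ({x | s ≤ f x} + t • L)).toReal
        = ∑ k : Fin (n + 1), (n.choose (k : ℕ) : ℝ) * W s k * t ^ (k : ℕ)) :
    Tendsto (deltaQuot f (L.indicator fun _ => (1 : ℝ))) (𝓝[>] (0 : ℝ))
      (𝓝 ((((n : ℝ) * ∫ s in Set.Ioi (0 : ℝ), W s 1) : ℝ) : EReal)) := by
  have hLne : L.Nonempty := hLint.mono interior_subset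
  have hKc : ∀ t : ℝ, IsCompact (t • L) := fun t => hLcomp.smul t
  have hKne : ∀ t : ℝ, (t • L).Nonempty := fun t => hLne.smul_set
  choose h h1 h2 h3 h4 using fun t : ℝ =>
    layer_aux hf0 hfusc hflc hfpos hffin (hKc t) (hKne t)
  have hmeas : ∀ t : ℝ, Measurable fun s : ℝ => volume ({x | s ≤ f x} + t • L) := by
    intro t
    apply Antitone.measurable
    intro s s' hss
    exact measure_mono (add_subset_add_right fun x hx => le_trans hss hx)
  have hfin : ∀ t : ℝ, ∫⁻ s in Ioi (0 : ℝ), volume ({x | s ≤ f x} + t • L) ≠ ⊤ := by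
    intro t; rw [← h3]; exact (h4 t).ne
  have hint : ∀ t : ℝ, IntegrableOn (fun s : ℝ => (volume ({x | s ≤ f x} + t • L)).toReal)
      (Ioi 0) := fun t =>
    integrable_toReal_of_lintegral_ne_top (hmeas t).aemeasurable (hfin t)
  -- the coefficients are integrable
  have hWint : ∀ k : Fin (n + 1), IntegrableOn (fun s => W s k) (Ioi 0) := by
    intro k
    set V : Matrix (Fin (n + 1)) (Fin (n + 1)) ℝ :=
      Matrix.vandermonde (fun j : Fin (n + 1) => ((j : ℕ) : ℝ)) with hV
    have hdet : V.det ≠ 0 := by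
      rw [hV, Matrix.det_vandermonde_ne_zero_iff]
      intro i j hij
      exact Fin.ext (Nat.cast_injective (R := ℝ) hij)
    have hch : (n.choose (k : ℕ) : ℝ) ≠ 0 := by
      exact_mod_cast (Nat.choose_pos (Nat.lt_succ_iff.1 k.2)).ne'
    have hsol : ∀ s ∈ Ioi (0 : ℝ), (n.choose (k : ℕ) : ℝ)⁻¹ *
        ∑ j : Fin (n + 1), V⁻¹ k j * (volume ({x | s ≤ f x} + ((j : ℕ) : ℝ) • L)).toReal
        = W s k := by
      intro s hs
      have hvec : V.mulVec (fun i : Fin (n + 1) => (n.choose (i : ℕ) : ℝ) * W s i) =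
          fun j : Fin (n + 1) => (volume ({x | s ≤ f x} + ((j : ℕ) : ℝ) • L)).toReal := by
        funext j
        rw [hW s hs _ (Nat.cast_nonneg _)]
        simp only [Matrix.mulVec, dotProduct, hV, Matrix.vandermonde_apply]
        exact Finset.sum_congr rfl fun i _ => by ring
      have hinv : V⁻¹.mulVec (V.mulVec (fun i : Fin (n + 1) => (n.choose (i : ℕ) : ℝ) * W s i)) =
          fun i : Fin (n + 1) => (n.choose (i : ℕ) : ℝ) * W s i := by
        rw [Matrix.mulVec_mulVec, Matrix.nonsing_inv_mul _ (isUnit_iff_ne_zero.2 hdet),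
          Matrix.one_mulVec]
      rw [hvec] at hinv
      have hk := congrFun hinv k
      simp only [Matrix.mulVec, dotProduct] at hk
      rw [hk, inv_mul_cancel_left₀ hch]
    refine IntegrableOn.congr_fun ?_ hsol measurableSet_Ioi
    exact (integrable_finsetSum _ fun j _ => (hint _).const_mul _).const_mul _
  set P : ℝ → ℝ := fun t => ∑ k : Fin (n + 1),
    (n.choose (k : ℕ) : ℝ) * (∫ s in Ioi (0 : ℝ), W s k) * t ^ (k : ℕ) with hP
  have hI : ∀ t : ℝ, 0 ≤ t → ∫⁻ x, ENNReal.ofReal (h t x) = ENNReal.ofReal (P t) := by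
    intro t ht
    rw [← ENNReal.ofReal_toReal (h4 t).ne, h3]
    congr 1
    rw [← integral_toReal (hmeas t).aemeasurable (ae_lt_top (hmeas t) (hfin t))]
    rw [setIntegral_congr_fun measurableSet_Ioi (fun s hs => hW s hs t ht)]
    rw [integral_finsetSum _ fun k _ => ((hWint k).const_mul _).mul_const _]
    refine Finset.sum_congr rfl fun k _ => ?_
    rw [integral_mul_const, integral_const_mul]
  have hPnn : ∀ t : ℝ, 0 ≤ t → 0 ≤ P t := by
    intro t ht
    have : P t = ∫ s in Ioi (0 : ℝ), (volume ({x | s ≤ f x} + t • L)).toReal := by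
      rw [setIntegral_congr_fun measurableSet_Ioi (fun s hs => hW s hs t ht)]
      rw [integral_finsetSum _ fun k _ => ((hWint k).const_mul _).mul_const _]
      refine Finset.sum_congr rfl fun k _ => ?_
      rw [integral_mul_const, integral_const_mul]
    rw [this]
    exact integral_nonneg fun s => ENNReal.toReal_nonneg
  have hmass : totalMass f = ENNReal.ofReal (P 0) := by
    rw [← hI 0 le_rfl]
    unfold totalMass
    refine lintegral_congr fun x => ?_
    obtain ⟨k, hk, hkx⟩ := h1 0 x
    rw [zero_smul_set hLne] at hk
    have hk0 : k = 0 := hk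
    rw [hkx, hk0, sub_zero]
  have hder : HasDerivAt P ((n : ℝ) * ∫ s in Ioi (0 : ℝ), W s 1) 0 := by
    have hd : HasDerivAt P (∑ k : Fin (n + 1), (n.choose (k : ℕ) : ℝ) *
        (∫ s in Ioi (0 : ℝ), W s k) * (((k : ℕ) : ℝ) * 0 ^ ((k : ℕ) - 1))) 0 :=
      HasDerivAt.fun_sum fun k _ => (hasDerivAt_pow (k : ℕ) (0 : ℝ)).const_mul _
    convert hd using 1
    clear * -
    rcases n with _ | n
    · simp
    · rw [Finset.sum_eq_single (1 : Fin (n + 1 + 1))]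
      · simp
      · intro k _ hk
        have hk1 : (k : ℕ) ≠ 1 := fun h => hk (Fin.ext (by simpa using h))
        rcases Nat.eq_zero_or_pos (k : ℕ) with h0 | h0
        · simp [h0]
        · rw [zero_pow (by omega)]; simp
      · simp
  have hlim := hder.tendsto_slope_zero_right
  simp only [zero_add, smul_eq_mul] at hlim
  have hlim' := (continuous_coe_real_ereal.tendsto _).comp hlim
  refine hlim'.congr' ?_
  filter_upwards [self_mem_nhdsWithin] with t ht
  have ht' : 0 < t := ht
  unfold deltaQuot
  rw [lintegral_congr (supConv_aux hf0 ht' (h1 t) (h2 t)), hI t ht'.le, hmass]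
  simp only [Function.comp_apply, EReal.coe_mul, EReal.coe_sub, EReal.coe_ennreal_ofReal]
  rw [max_eq_left (hPnn t ht'.le), max_eq_left (hPnn 0 le_rfl)]

end
end

section
/- Let f : ℝⁿ → [0,∞) be upper semicontinuous and log-concave with 0 < ∫_{ℝⁿ} f dx < ∞, and let L, B ⊂ ℝⁿ be compact convex sets. Then δ(f, 1_{L+B}) = δ(f, 1_L) + δ(f, 1_B), where L + B is the Minkowski sum and 1_K denotes the indicator function of K. -/
open MeasureTheory Set Filter Topology Pointwise
open scoped ENNReal RealInnerProductSpace NNReal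

noncomputable section

lemma bm_one (A B C : Set ℝ) (hA : MeasurableSet A) (hB : MeasurableSet B)
    (hAn : A.Nonempty) (hBn : B.Nonempty)
    (h : ∀ a ∈ A, ∀ b ∈ B, (a + b) / 2 ∈ C) :
    volume A + volume B ≤ 2 * volume C := by
  have key : ∀ K₁ K₂ : Set ℝ, IsCompact K₁ → IsCompact K₂ → K₁ ⊆ A → K₂ ⊆ B →
      K₁.Nonempty → K₂.Nonempty → volume K₁ + volume K₂ ≤ 2 * volume C := by
    intro K₁ K₂ c₁ c₂ s₁ s₂ n₁ n₂
    obtain ⟨a, ha, ha'⟩ := c₁.exists_isGreatest n₁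
    obtain ⟨b, hb, hb'⟩ := c₂.exists_isLeast n₂
    have e₁ : volume ((fun x : ℝ => (2:ℝ) * x + (-b)) ⁻¹' K₁) = ENNReal.ofReal (2⁻¹) * volume K₁ := by
      have : (fun x : ℝ => (2:ℝ) * x + (-b)) ⁻¹' K₁
        = (fun x : ℝ => 2 * x) ⁻¹' ((fun x : ℝ => x + (-b)) ⁻¹' K₁) := rfl
      rw [this, Real.volume_preimage_mul_left (by norm_num), measure_preimage_add_right]
      norm_num
    have e₂ : volume ((fun x : ℝ => (2:ℝ) * x + (-a)) ⁻¹' K₂) = ENNReal.ofReal (2⁻¹) * volume K₂ := by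
      have : (fun x : ℝ => (2:ℝ) * x + (-a)) ⁻¹' K₂
        = (fun x : ℝ => 2 * x) ⁻¹' ((fun x : ℝ => x + (-a)) ⁻¹' K₂) := rfl
      rw [this, Real.volume_preimage_mul_left (by norm_num), measure_preimage_add_right]
      norm_num
    set P := (fun x : ℝ => (2:ℝ) * x + (-b)) ⁻¹' K₁ with hP
    set Q := (fun x : ℝ => (2:ℝ) * x + (-a)) ⁻¹' K₂ with hQ
    have mQ : MeasurableSet Q := c₂.measurableSet.preimage (by fun_prop)
    have hsub : P ∪ Q ⊆ C := by
      rintro x (hx | hx)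
      · have := h _ (s₁ hx) b (s₂ hb)
        convert this using 1; ring
      · have := h a (s₁ ha) _ (s₂ hx)
        convert this using 1; ring
    have hcap : volume (P ∩ Q) = 0 := by
      refine measure_mono_null (t := {(a + b) / 2}) ?_ (by simp)
      rintro x ⟨hx, hy⟩
      have h1 := ha' hx
      have h2 := hb' hy
      simp only [mem_singleton_iff]
      linarith
    have hu := measure_union_add_inter (μ := volume) P mQ
    rw [hcap, add_zero, e₁, e₂] at hu
    have h3 : volume (P ∪ Q) ≤ volume C := measure_mono hsub
    rw [hu, ← mul_add] at h3
    calc volume K₁ + volume K₂ = 2 * (ENNReal.ofReal 2⁻¹ * (volume K₁ + volume K₂)) := by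
          rw [← mul_assoc]
          have : (2:ℝ≥0∞) * ENNReal.ofReal 2⁻¹ = 1 := by
            rw [ENNReal.ofReal_inv_of_pos (by norm_num)]
            simpa using ENNReal.mul_inv_cancel (a := 2) (by norm_num) (by norm_num)
          rw [this, one_mul]
      _ ≤ _ := by gcongr
  obtain ⟨a₀, ha₀⟩ := hAn
  obtain ⟨b₀, hb₀⟩ := hBn
  have key2 : ∀ K₁ K₂ : Set ℝ, IsCompact K₁ → IsCompact K₂ → K₁ ⊆ A → K₂ ⊆ B →
      volume K₁ + volume K₂ ≤ 2 * volume C := by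
    intro K₁ K₂ c₁ c₂ s₁ s₂
    refine le_trans ?_ (key (insert a₀ K₁) (insert b₀ K₂) (c₁.insert _) (c₂.insert _)
      (insert_subset ha₀ s₁) (insert_subset hb₀ s₂) (insert_nonempty _ _) (insert_nonempty _ _))
    gcongr <;> exact subset_insert _ _
  rw [hA.measure_eq_iSup_isCompact, hB.measure_eq_iSup_isCompact]
  simp only [iSup_and']
  exact ENNReal.biSup_add_biSup_le' (p := fun K => K ⊆ A ∧ IsCompact K)
    (q := fun K => K ⊆ B ∧ IsCompact K) ⟨∅, empty_subset _, isCompact_empty⟩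
    ⟨∅, empty_subset _, isCompact_empty⟩
    (fun K₁ h₁ K₂ h₂ => key2 K₁ K₂ h₁.2 h₂.2 h₁.1 h₂.1)

lemma amgm_enn (x y : ℝ≥0∞) : 4 * (x * y) ≤ (x + y) ^ 2 := by
  by_cases hx : x = ⊤
  · subst hx; simp
  by_cases hy : y = ⊤
  · subst hy; simp
  lift x to ℝ≥0 using hx
  lift y to ℝ≥0 using hy
  norm_cast
  rw [← NNReal.coe_le_coe]
  push_cast
  nlinarith [sq_nonneg ((x:ℝ) - y)]

lemma pl_norm (f g h : ℝ → ℝ≥0∞) (hf : Measurable f) (hg : Measurable g) (hh : Measurable h)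
    (hfs : ⨆ x, f x = 1) (hgs : ⨆ x, g x = 1)
    (H : ∀ x y, f x * g y ≤ h ((x + y) / 2) ^ 2) :
    (∫⁻ x, f x) + ∫⁻ x, g x ≤ 2 * ∫⁻ x, h x := by
  have lc : ∀ f : ℝ → ℝ≥0∞, Measurable f → (∀ x, f x ≤ 1) →
      ∫⁻ x, f x = ∫⁻ t in Ioi (0:ℝ), volume {x | ENNReal.ofReal t < f x} := by
    intro f hf h1
    have hft : ∀ x, f x ≠ ⊤ := fun x => ne_top_of_le_ne_top (by simp) (h1 x)
    have := lintegral_eq_lintegral_meas_lt (volume : Measure ℝ) (f := fun x => (f x).toReal)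
      (Eventually.of_forall fun x => ENNReal.toReal_nonneg) (hf.ennreal_toReal.aemeasurable)
    simp only [ENNReal.ofReal_toReal (hft _)] at this
    rw [this]
    refine setLIntegral_congr_fun measurableSet_Ioi fun t ht => ?_
    congr 1
    ext x
    simp only [mem_ofPred_eq]
    rw [ENNReal.ofReal_lt_iff_lt_toReal (le_of_lt ht) (hft x)]
  have hf1 : ∀ x, f x ≤ 1 := fun x => hfs ▸ le_iSup f x
  have hg1 : ∀ x, g x ≤ 1 := fun x => hgs ▸ le_iSup g x
  have hle : ∫⁻ x, min (h x) 1 ≤ ∫⁻ x, h x := lintegral_mono fun x => min_le_left _ _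
  refine le_trans ?_ (mul_le_mul_right hle 2)
  rw [lc f hf hf1, lc g hg hg1, lc _ (hh.min measurable_const) fun x => min_le_right _ _]
  rw [← lintegral_add_left', ← lintegral_const_mul']
  · refine setLIntegral_mono' measurableSet_Ioi fun t ht => ?_
    by_cases ht1 : t < 1
    · have ht1' : ENNReal.ofReal t < 1 := by simpa using ht1
      refine bm_one _ _ _ (measurableSet_lt measurable_const hf) (measurableSet_lt measurable_const hg)
        ?_ ?_ ?_
      · rw [← hfs, lt_iSup_iff] at ht1'; exact ht1'
      · rw [← hgs, lt_iSup_iff] at ht1'; exact ht1'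
      · intro a ha b hb
        simp only [mem_ofPred_eq] at *
        refine lt_min ?_ ht1'
        have := (ENNReal.mul_lt_mul ha hb).trans_le (H a b)
        rw [← sq] at this
        exact lt_of_pow_lt_pow_left' 2 this
    · have : ∀ f : ℝ → ℝ≥0∞, (∀ x, f x ≤ 1) → volume {x | ENNReal.ofReal t < f x} = 0 := by
        intro f hf
        have : {x | ENNReal.ofReal t < f x} = ∅ := by
          ext x
          simp only [mem_ofPred_eq, mem_empty_iff_false, iff_false, not_lt]
          exact (hf x).trans (by simpa using ht1)
        simp [this]
      rw [this f hf1, this g hg1]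
      simp
  · simp
  · refine Measurable.aemeasurable (Antitone.measurable ?_)
    intro s t hst
    refine measure_mono fun x hx => ?_
    exact lt_of_le_of_lt (ENNReal.ofReal_le_ofReal hst) hx

lemma pl_bdd (f g h : ℝ → ℝ≥0∞) (hf : Measurable f) (hg : Measurable g) (hh : Measurable h)
    (hfs : ⨆ x, f x ≠ ⊤) (hgs : ⨆ x, g x ≠ ⊤)
    (H : ∀ x y, f x * g y ≤ h ((x + y) / 2) ^ 2) :
    (∫⁻ x, f x) * ∫⁻ x, g x ≤ (∫⁻ x, h x) ^ 2 := by
  set a := ⨆ x, f x with ha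
  set b := ⨆ x, g x with hb
  by_cases ha0 : a = 0
  · have : ∀ x, f x = 0 := by simpa [ha] using ha0
    simp [this]
  by_cases hb0 : b = 0
  · have : ∀ x, g x = 0 := by simpa [hb] using hb0
    simp [this]
  set c := (a * b) ^ (1/2 : ℝ) with hc
  have hc2 : c ^ 2 = a * b := by
    rw [hc, ← ENNReal.rpow_natCast, ← ENNReal.rpow_mul]; norm_num
  have hab0 : a * b ≠ 0 := mul_ne_zero ha0 hb0
  have habt : a * b ≠ ⊤ := ENNReal.mul_ne_top hfs hgs
  have := pl_norm (fun x => a⁻¹ * f x) (fun x => b⁻¹ * g x) (fun x => c⁻¹ * h x)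
    (hf.const_mul _) (hg.const_mul _) (hh.const_mul _)
    (by rw [← ENNReal.mul_iSup, ENNReal.inv_mul_cancel ha0 hfs])
    (by rw [← ENNReal.mul_iSup, ENNReal.inv_mul_cancel hb0 hgs]) (by
      intro x y
      rw [mul_pow, ← ENNReal.inv_pow, hc2, ENNReal.mul_inv (Or.inl ha0) (Or.inl hfs)]
      calc _ = a⁻¹ * b⁻¹ * (f x * g y) := by ring
        _ ≤ _ := by gcongr; exact H x y)
  rw [lintegral_const_mul _ hf, lintegral_const_mul _ hg, lintegral_const_mul _ hh] at this
  have h2 := (amgm_enn _ _).trans (pow_le_pow_left₀ zero_le this 2)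
  have h3 : 4 * ((a * b)⁻¹ * ((∫⁻ x, f x) * ∫⁻ x, g x)) ≤ 4 * ((a * b)⁻¹ * (∫⁻ x, h x) ^ 2) := by
    calc _ = 4 * ((a⁻¹ * ∫⁻ x, f x) * (b⁻¹ * ∫⁻ x, g x)) := by
            rw [ENNReal.mul_inv (Or.inl ha0) (Or.inl hfs)]; ring
      _ ≤ _ := h2
      _ = _ := by
            rw [mul_pow, mul_pow, ← ENNReal.inv_pow, hc2]; norm_num
  have h4 : (a * b)⁻¹ * ((∫⁻ x, f x) * ∫⁻ x, g x) ≤ (a * b)⁻¹ * (∫⁻ x, h x) ^ 2 :=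
    (ENNReal.mul_le_mul_iff_right (by norm_num) (by norm_num)).1 h3
  exact (ENNReal.mul_le_mul_iff_right (by simpa using habt) (by simpa using ⟨ha0, hb0⟩)).1 h4

lemma pl_one (f g h : ℝ → ℝ≥0∞) (hf : Measurable f) (hg : Measurable g) (hh : Measurable h)
    (H : ∀ x y, f x * g y ≤ h ((x + y) / 2) ^ 2) :
    (∫⁻ x, f x) * ∫⁻ x, g x ≤ (∫⁻ x, h x) ^ 2 := by
  have tr : ∀ f : ℝ → ℝ≥0∞, Measurable f → ∫⁻ x, f x = ⨆ N : ℕ, ∫⁻ x, min (f x) N := by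
    intro f hf
    rw [← lintegral_iSup (fun N => hf.min measurable_const)]
    · congr 1; ext x
      rw [← inf_iSup_eq, ENNReal.iSup_natCast, inf_top_eq]
    · intro m n hmn x
      exact min_le_min_left _ (by exact_mod_cast hmn)
  rw [tr f hf, tr g hg]
  simp only [ENNReal.iSup_mul, ENNReal.mul_iSup, iSup_le_iff]
  intro N N'
  refine pl_bdd _ _ h (hf.min measurable_const) (hg.min measurable_const) hh ?_ ?_ ?_
  · exact ne_top_of_le_ne_top (ENNReal.natCast_ne_top _) (iSup_le fun x => min_le_right _ _)
  · exact ne_top_of_le_ne_top (ENNReal.natCast_ne_top _) (iSup_le fun x => min_le_right _ _)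
  · intro x y
    exact (mul_le_mul' (min_le_left _ _) (min_le_left _ _)).trans (H x y)

lemma pl_pi (n : ℕ) : ∀ (f g h : (Fin n → ℝ) → ℝ≥0∞) (_ : Measurable f) (_ : Measurable g)
    (_ : Measurable h) (_ : ∀ x y, f x * g y ≤ h ((1/2 : ℝ) • (x + y)) ^ 2),
    (∫⁻ x, f x) * ∫⁻ x, g x ≤ (∫⁻ x, h x) ^ 2 := by
  induction n with
  | zero =>
    intro f g h hf hg hh H
    have e : (volume : Measure (Fin 0 → ℝ)) = Measure.dirac 0 := by
      rw [volume_pi, Measure.pi_of_empty (x := 0)]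
    rw [e, lintegral_dirac, lintegral_dirac, lintegral_dirac]
    simpa using H 0 0
  | succ n ih =>
    intro f g h hf hg hh H
    have mp := (volume_preserving_piFinSuccAbove (fun _ : Fin (n+1) => ℝ) 0).symm
    set e := (MeasurableEquiv.piFinSuccAbove (fun _ : Fin (n+1) => ℝ) 0).symm with he
    have key : ∀ f : (Fin (n+1) → ℝ) → ℝ≥0∞, Measurable f →
        ∫⁻ x, f x = ∫⁻ a, ∫⁻ v, f (e (a, v)) := by
      intro f hf
      rw [← mp.lintegral_comp hf]
      exact lintegral_prod _ ((hf.comp e.measurable).aemeasurable)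
    have km : ∀ f : (Fin (n+1) → ℝ) → ℝ≥0∞, Measurable f → Measurable fun a => ∫⁻ v, f (e (a, v)) := by
      intro f hf
      exact Measurable.lintegral_prod_right' (f := fun p => f (e p)) (hf.comp e.measurable)
    rw [key f hf, key g hg, key h hh]
    refine pl_one _ _ _ (km f hf) (km g hg) (km h hh) fun a b => ?_
    refine ih _ _ _ (hf.comp (e.measurable.comp measurable_prodMk_left))
      (hg.comp (e.measurable.comp measurable_prodMk_left))
      (hh.comp (e.measurable.comp measurable_prodMk_left)) fun v w => ?_
    have : e ((a + b) / 2, (1/2 : ℝ) • (v + w)) = (1/2 : ℝ) • (e (a, v) + e (b, w)) := by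
      ext i
      refine Fin.cases ?_ (fun j => ?_) i
      · simp [he, MeasurableEquiv.piFinSuccAbove, Fin.insertNthEquiv]; ring
      · simp [he, MeasurableEquiv.piFinSuccAbove, Fin.insertNthEquiv]; ring
    have h5 := H (e (a, v)) (e (b, w))
    rw [← this] at h5
    exact h5

lemma pl_euc {n : ℕ} (f g h : Euc n → ℝ≥0∞) (hf : Measurable f) (hg : Measurable g)
    (hh : Measurable h) (H : ∀ x y, f x * g y ≤ h ((1/2 : ℝ) • (x + y)) ^ 2) :
    (∫⁻ x, f x) * ∫⁻ x, g x ≤ (∫⁻ x, h x) ^ 2 := by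
  have mp := PiLp.volume_preserving_toLp (Fin n)
  rw [← mp.lintegral_comp hf, ← mp.lintegral_comp hg, ← mp.lintegral_comp hh]
  refine pl_pi n _ _ _ (hf.comp mp.measurable) (hg.comp mp.measurable) (hh.comp mp.measurable) ?_
  intro x y
  exact H _ _

/-- Supremum of `g` over the translates `x - t z`, `z ∈ L`. -/
def sS {n : ℕ} (L : Set (Euc n)) (t : ℝ) (g : Euc n → ℝ≥0∞) (x : Euc n) : ℝ≥0∞ :=
  ⨆ z ∈ L, g (x - t • z)

/-- Mass of `sS`. -/
def FF {n : ℕ} (L : Set (Euc n)) (t : ℝ) (g : Euc n → ℝ≥0∞) : ℝ≥0∞ := ∫⁻ x, sS L t g x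

/-- Real support function of the negative gradient. -/
def hs {n : ℕ} (L : Set (Euc n)) (u : Euc n → ℝ) (x : Euc n) : ℝ :=
  sSup ((fun z => -(fderiv ℝ u x z)) '' L)

/-- Log-Lipschitz positive finite-mass functions. -/
structure Good {n : ℕ} (K : ℝ) (g : Euc n → ℝ≥0∞) : Prop where
  K0 : 0 ≤ K
  ne_top : ∀ x, g x ≠ ⊤
  ne_zero : ∀ x, g x ≠ 0
  shift : ∀ x v, g (x + v) ≤ ENNReal.ofReal (Real.exp (K * ‖v‖)) * g x
  meas : Measurable g
  mass : ∫⁻ x, g x ≠ ⊤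

namespace Good
variable {n : ℕ} {K : ℝ} {g : Euc n → ℝ≥0∞}

lemma pos (hg : Good K g) (x) : 0 < (g x).toReal :=
  ENNReal.toReal_pos (hg.ne_zero x) (hg.ne_top x)

lemma rshift (hg : Good K g) (x v) :
    (g (x + v)).toReal ≤ Real.exp (K * ‖v‖) * (g x).toReal := by
  have := ENNReal.toReal_mono (ENNReal.mul_ne_top ENNReal.ofReal_ne_top (hg.ne_top x)) (hg.shift x v)
  rwa [ENNReal.toReal_mul, ENNReal.toReal_ofReal (Real.exp_pos _).le] at this

lemma lip (hg : Good K g) : LipschitzWith K.toNNReal (fun x => Real.log (g x).toReal) := by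
  refine LipschitzWith.of_le_add_mul _ fun x y => ?_
  have h := hg.rshift y (x - y)
  rw [add_sub_cancel] at h
  have := Real.log_le_log (hg.pos x) h
  rw [Real.log_mul (Real.exp_pos _).ne' (hg.pos y).ne', Real.log_exp] at this
  rw [dist_eq_norm, Real.coe_toNNReal _ hg.K0]
  linarith

lemma eq_exp (hg : Good K g) : (fun x => (g x).toReal) = fun x => Real.exp (Real.log (g x).toReal) := by
  ext x; rw [Real.exp_log (hg.pos x)]

lemma cont (hg : Good K g) : Continuous (fun x => (g x).toReal) := by
  rw [hg.eq_exp]; exact Real.continuous_exp.comp hg.lip.continuous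

lemma contE (hg : Good K g) : Continuous g := by
  have : g = fun x => ENNReal.ofReal (g x).toReal := by
    ext x; rw [ENNReal.ofReal_toReal (hg.ne_top x)]
  rw [this]
  exact ENNReal.continuous_ofReal.comp hg.cont

lemma diff (hg : Good K g) : ∀ᵐ x : Euc n, DifferentiableAt ℝ (fun x => (g x).toReal) x := by
  filter_upwards [hg.lip.ae_differentiableAt (μ := volume)] with x hx
  rw [hg.eq_exp]
  exact hx.exp

lemma sS_meas (hg : Good K g) (L : Set (Euc n)) (t : ℝ) : Measurable (sS L t g) := by
  refine LowerSemicontinuous.measurable ?_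
  unfold sS
  refine lowerSemicontinuous_iSup fun z => lowerSemicontinuous_iSup fun _ => ?_
  exact (hg.contE.comp (by fun_prop)).lowerSemicontinuous

lemma integ (hg : Good K g) : Integrable (fun x => (g x).toReal) :=
  integrable_toReal_of_lintegral_ne_top hg.meas.aemeasurable hg.mass

lemma le_sS {L : Set (Euc n)} {t : ℝ} {x z : Euc n} (hz : z ∈ L) :
    g (x - t • z) ≤ sS L t g x := le_iSup₂ (f := fun z (_ : z ∈ L) => g (x - t • z)) z hz

lemma sS_le (hg : Good K g) {L : Set (Euc n)} {R : ℝ} (hR : ∀ z ∈ L, ‖z‖ ≤ R) {t : ℝ} (ht : 0 ≤ t)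
    (x : Euc n) : sS L t g x ≤ ENNReal.ofReal (Real.exp (K * (t * R))) * g x := by
  refine iSup₂_le fun z hz => ?_
  rw [sub_eq_add_neg]
  refine (hg.shift x _).trans ?_
  gcongr
  · exact hg.K0
  · rw [norm_neg, norm_smul, Real.norm_eq_abs, abs_of_nonneg ht]
    gcongr; exact hR z hz

lemma sS_ne_top (hg : Good K g) {L : Set (Euc n)} {R : ℝ} (hR : ∀ z ∈ L, ‖z‖ ≤ R) {t : ℝ} (ht : 0 ≤ t)
    (x : Euc n) : sS L t g x ≠ ⊤ :=
  ne_top_of_le_ne_top (ENNReal.mul_ne_top ENNReal.ofReal_ne_top (hg.ne_top x)) (hg.sS_le hR ht x)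

lemma FF_ne_top (hg : Good K g) {L : Set (Euc n)} {R : ℝ} (hR : ∀ z ∈ L, ‖z‖ ≤ R) {t : ℝ} (ht : 0 ≤ t) :
    FF L t g ≠ ⊤ := by
  refine ne_top_of_le_ne_top ?_ (lintegral_mono (hg.sS_le hR ht))
  rw [lintegral_const_mul _ hg.meas]
  exact ENNReal.mul_ne_top ENNReal.ofReal_ne_top hg.mass

lemma tend_pt (hg : Good K g) {L : Set (Euc n)} {R : ℝ} (hR0 : 0 < R) (hR : ∀ z ∈ L, ‖z‖ ≤ R)
    (hn : L.Nonempty) {x : Euc n} (hx : DifferentiableAt ℝ (fun x => (g x).toReal) x) :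
    Tendsto (fun t : ℝ => ((sS L t g x).toReal - (g x).toReal) / t) (𝓝[>] 0)
      (𝓝 (hs L (fun x => (g x).toReal) x)) := by
  rw [Metric.tendsto_nhds]
  intro ε hε
  set η := ε / (2 * R) with hη
  have hηp : 0 < η := by positivity
  have h1 := (Asymptotics.isLittleO_iff.1 hx.hasFDerivAt.isLittleO) hηp
  obtain ⟨δ, hδ, h2⟩ := Metric.eventually_nhds_iff.1 h1
  set A := fderiv ℝ (fun x => (g x).toReal) x with hA
  have hδR : 0 < δ / R := by positivity
  have hb : BddAbove ((fun z => -(A z)) '' L) := by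
    refine ⟨‖A‖ * R, ?_⟩
    rintro _ ⟨z, hz, rfl⟩
    refine (le_abs_self _).trans ?_
    rw [abs_neg, ← Real.norm_eq_abs]
    exact (A.le_opNorm z).trans (by gcongr; exact hR z hz)
  filter_upwards [Ioo_mem_nhdsGT hδR] with t ht
  have key : ∀ z ∈ L, |(g (x - t • z)).toReal - (g x).toReal + t * A z| ≤ η * (t * R) := by
    intro z hz
    have hnz : ‖t • z‖ ≤ t * R := by
      rw [norm_smul, Real.norm_eq_abs, abs_of_pos ht.1]
      have := ht.1
      gcongr
      exact hR z hz
    have h3 := @h2 (x - t • z) (by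
      rw [dist_eq_norm, sub_sub_cancel_left, norm_neg]
      refine lt_of_le_of_lt hnz ?_
      have := ht.2
      rwa [lt_div_iff₀ hR0] at this)
    rw [sub_sub_cancel_left, norm_neg, map_neg, map_smul, Real.norm_eq_abs] at h3
    rw [smul_eq_mul, sub_neg_eq_add] at h3
    exact h3.trans (by gcongr)
  have ht0 := ht.1
  have hup : (sS L t g x).toReal ≤ (g x).toReal + t * (hs L (fun x => (g x).toReal) x + η * R) := by
    refine ENNReal.toReal_le_of_le_ofReal ?_ ?_
    · obtain ⟨z, hz⟩ := hn
      have h4 := key z hz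
      have h5 : -(A z) ≤ hs L (fun x => (g x).toReal) x := le_csSup hb ⟨z, hz, rfl⟩
      have h6 := (abs_le.1 h4).2
      have := hg.pos (x - t • z)
      nlinarith
    · refine iSup₂_le fun z hz => ?_
      rw [← ENNReal.ofReal_toReal (hg.ne_top (x - t • z))]
      refine ENNReal.ofReal_le_ofReal ?_
      have h4 := key z hz
      have h5 : -(A z) ≤ hs L (fun x => (g x).toReal) x := le_csSup hb ⟨z, hz, rfl⟩
      have h6 := (abs_le.1 h4).2
      nlinarith
  have hlo : hs L (fun x => (g x).toReal) x ≤ ((sS L t g x).toReal - (g x).toReal) / t + η * R := by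
    refine csSup_le (hn.image _) ?_
    rintro _ ⟨z, hz, rfl⟩
    have h4 := (abs_le.1 (key z hz)).1
    have h5 : (g (x - t • z)).toReal ≤ (sS L t g x).toReal :=
      ENNReal.toReal_mono (hg.sS_ne_top hR ht0.le x) (le_sS hz)
    have : -(A z) - η * R ≤ ((sS L t g x).toReal - (g x).toReal) / t := by
      rw [le_div_iff₀ ht0]; nlinarith
    simp only [← hA]
    linarith
  have hup2 : ((sS L t g x).toReal - (g x).toReal) / t ≤ hs L (fun x => (g x).toReal) x + η * R := by
    rw [div_le_iff₀ ht0]; nlinarith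
  have : η * R = ε / 2 := by rw [hη]; field_simp
  rw [Real.dist_eq, abs_lt]
  constructor <;> linarith

lemma q_bound (hg : Good K g) {L : Set (Euc n)} {R : ℝ} (hR0 : 0 < R) (hR : ∀ z ∈ L, ‖z‖ ≤ R)
    (hn : L.Nonempty) (x : Euc n) {t : ℝ} (ht : t ∈ Ioo (0:ℝ) 1) :
    ‖((sS L t g x).toReal - (g x).toReal) / t‖ ≤ K * R * Real.exp (K * R) * (g x).toReal := by
  have ht0 := ht.1
  have hK := hg.K0
  have hgx := hg.pos x
  have h1 : (sS L t g x).toReal ≤ Real.exp (K * (t * R)) * (g x).toReal := by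
    have := ENNReal.toReal_mono (ENNReal.mul_ne_top ENNReal.ofReal_ne_top (hg.ne_top x)) (hg.sS_le hR ht0.le x)
    rwa [ENNReal.toReal_mul, ENNReal.toReal_ofReal (Real.exp_pos _).le] at this
  set a := K * (t * R) with ha
  have ha0 : 0 ≤ a := by positivity
  have haK : a ≤ K * R := by
    rw [ha]; gcongr; nlinarith [ht.2]
  have hexp : Real.exp a - 1 ≤ a * Real.exp (K * R) := by
    have h := Real.add_one_le_exp (-a)
    have h2 : Real.exp a * Real.exp (-a) = 1 := by rw [← Real.exp_add]; simp
    have h3 := Real.exp_le_exp.2 haK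
    nlinarith [Real.exp_pos a]
  have h2 : (1 - a) * (g x).toReal ≤ (sS L t g x).toReal := by
    obtain ⟨z, hz⟩ := hn
    have h5 : (g (x - t • z)).toReal ≤ (sS L t g x).toReal :=
      ENNReal.toReal_mono (hg.sS_ne_top hR ht0.le x) (le_sS hz)
    have h6 := hg.rshift (x - t • z) (t • z)
    rw [sub_add_cancel, norm_smul, Real.norm_eq_abs, abs_of_pos ht0] at h6
    have h7 : Real.exp (K * (t * ‖z‖)) ≤ Real.exp a := by
      apply Real.exp_le_exp.2; rw [ha]; gcongr; exact hR z hz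
    have h8 : (g x).toReal ≤ Real.exp a * (g (x - t • z)).toReal :=
      h6.trans (by gcongr)
    have h := Real.add_one_le_exp (-a)
    have h2 : Real.exp (-a) * Real.exp a = 1 := by rw [← Real.exp_add]; simp
    have h9 : Real.exp (-a) * (g x).toReal ≤ (g (x - t • z)).toReal := by
      calc _ ≤ Real.exp (-a) * (Real.exp a * (g (x - t • z)).toReal) := by gcongr
        _ = _ := by rw [← mul_assoc, h2, one_mul]
    nlinarith
  have hE : 1 ≤ Real.exp (K * R) := Real.one_le_exp (by positivity)
  have e1 : K * R * Real.exp (K * R) * (g x).toReal * t = a * Real.exp (K * R) * (g x).toReal := by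
    rw [ha]; ring
  rw [Real.norm_eq_abs, abs_le]
  constructor
  · rw [le_div_iff₀ ht0, neg_mul, e1]
    have : a * 1 * (g x).toReal ≤ a * Real.exp (K * R) * (g x).toReal := by gcongr
    nlinarith
  · rw [div_le_iff₀ ht0, e1]
    nlinarith

lemma hs_integ (hg : Good K g) {L : Set (Euc n)} (hL : IsCompact L) (hn : L.Nonempty) :
    Integrable (hs L (fun x => (g x).toReal)) := by
  obtain ⟨R, hR0, hR⟩ := hL.isBounded.exists_pos_norm_le
  have hseq : Tendsto (fun k : ℕ => (1:ℝ) / ((k:ℝ) + 2)) atTop (𝓝[>] 0) := by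
    rw [tendsto_nhdsWithin_iff]
    refine ⟨?_, Eventually.of_forall fun k => by simp only [mem_Ioi]; positivity⟩
    refine Tendsto.div_atTop tendsto_const_nhds ?_
    exact tendsto_atTop_add_const_right _ _ tendsto_natCast_atTop_atTop
  refine Integrable.mono' (hg.integ.const_mul (K * R * Real.exp (K * R))) ?_ ?_
  · refine aestronglyMeasurable_of_tendsto_ae atTop (f := fun (k : ℕ) x =>
      ((sS L (1 / ((k:ℝ) + 2)) g x).toReal - (g x).toReal) / (1 / ((k:ℝ) + 2))) ?_ ?_
    · intro k
      exact (((hg.sS_meas L _).ennreal_toReal.sub hg.meas.ennreal_toReal).div_const _).aestronglyMeasurable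
    · filter_upwards [hg.diff] with x hx
      exact (hg.tend_pt hR0 hR hn hx).comp hseq
  · filter_upwards [hg.diff] with x hx
    refine le_of_tendsto (hg.tend_pt hR0 hR hn hx).norm ?_
    filter_upwards [Ioo_mem_nhdsGT one_pos] with t ht
    exact hg.q_bound hR0 hR hn x ht

lemma tend (hg : Good K g) {L : Set (Euc n)} (hL : IsCompact L) (hn : L.Nonempty) :
    Tendsto (fun t : ℝ => ((FF L t g).toReal - (∫⁻ x, g x).toReal) / t) (𝓝[>] 0)
      (𝓝 (∫ x, hs L (fun x => (g x).toReal) x)) := by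
  obtain ⟨R, hR0, hR⟩ := hL.isBounded.exists_pos_norm_le
  have h1 : Tendsto (fun t : ℝ => ∫ x, ((sS L t g x).toReal - (g x).toReal) / t) (𝓝[>] 0)
      (𝓝 (∫ x, hs L (fun x => (g x).toReal) x)) := by
    refine tendsto_integral_filter_of_dominated_convergence
      (fun x => K * R * Real.exp (K * R) * (g x).toReal) ?_ ?_ ?_ ?_
    · exact Eventually.of_forall fun t => 
       (((hg.sS_meas L _).ennreal_toReal.sub hg.meas.ennreal_toReal).div_const _).aestronglyMeasurable
    · filter_upwards [Ioo_mem_nhdsGT one_pos] with t ht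
      exact Eventually.of_forall fun x => hg.q_bound hR0 hR hn x ht
    · exact hg.integ.const_mul _
    · filter_upwards [hg.diff] with x hx
      exact hg.tend_pt hR0 hR hn hx
  refine h1.congr' ?_
  filter_upwards [self_mem_nhdsWithin] with t ht
  have ht0 : (0:ℝ) ≤ t := le_of_lt ht
  rw [integral_div, integral_sub, integral_toReal, integral_toReal]
  · rfl
  · exact hg.meas.aemeasurable
  · exact Eventually.of_forall fun x => (hg.ne_top x).lt_top
  · exact (hg.sS_meas L t).aemeasurable
  · exact Eventually.of_forall fun x => (hg.sS_ne_top hR ht0 x).lt_top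
  · exact integrable_toReal_of_lintegral_ne_top (hg.sS_meas L t).aemeasurable (hg.FF_ne_top hR ht0)
  · exact hg.integ

lemma hs_add {L B : Set (Euc n)} (hL : IsCompact L) (hn : L.Nonempty)
    (hB : IsCompact B) (hBn : B.Nonempty) (u : Euc n → ℝ) (x : Euc n) :
    hs (L + B) u x = hs L u x + hs B u x := by
  unfold hs
  have hc : Continuous fun z => -(fderiv ℝ u x z) := by fun_prop
  rw [← csSup_add (hn.image _) (hL.image hc).bddAbove (hBn.image _) (hB.image hc).bddAbove]
  congr 1
  ext r
  simp only [mem_image, Set.mem_add]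
  constructor
  · rintro ⟨_, ⟨a, ha, b, hb, rfl⟩, rfl⟩
    exact ⟨_, ⟨a, ha, rfl⟩, _, ⟨b, hb, rfl⟩, by rw [map_add]; ring⟩
  · rintro ⟨_, ⟨a, ha, rfl⟩, _, ⟨b, hb, rfl⟩, rfl⟩
    exact ⟨_, ⟨a, ha, b, hb, rfl⟩, by rw [map_add]; ring⟩

end Good

namespace Good
variable {n : ℕ} {K : ℝ} {g : Euc n → ℝ≥0∞}

lemma M_pos (hg : Good K g) : 0 < (∫⁻ x, g x).toReal := by
  refine ENNReal.toReal_pos ?_ hg.mass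
  intro h
  rw [lintegral_eq_zero_iff hg.meas] at h
  have : ∀ᵐ x : Euc n, False := by
    filter_upwards [h] with x hx
    exact hg.ne_zero x hx
  have h0 : (volume : Measure (Euc n)) = 0 := by simpa using this
  exact (NeZero.ne (volume : Measure (Euc n))) h0

lemma mid_FF (hg : Good K g) (hmid : ∀ x y, g x * g y ≤ g ((1/2 : ℝ) • (x + y)) ^ 2)
    (L : Set (Euc n)) (t : ℝ) :
    FF L t g * (∫⁻ x, g x) ≤ FF L (t / 2) g ^ 2 := by
  refine pl_euc _ _ _ (hg.sS_meas L t) hg.meas (hg.sS_meas L _) fun x y => ?_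
  unfold sS
  simp only [ENNReal.iSup_mul]
  refine iSup₂_le fun z hz => (hmid _ _).trans ?_
  refine pow_le_pow_left₀ zero_le ?_ 2
  have : (1/2 : ℝ) • (x - t • z + y) = (1/2 : ℝ) • (x + y) - (t / 2) • z := by module
  rw [this]
  exact le_iSup₂ (f := fun z (_ : z ∈ L) => g ((1/2 : ℝ) • (x + y) - (t / 2) • z)) z hz

lemma FF_ge {L : Set (Euc n)} (hn : L.Nonempty) (t : ℝ) : ∫⁻ x, g x ≤ FF L t g := by
  obtain ⟨z, hz⟩ := hn
  calc ∫⁻ x, g x = ∫⁻ x, g (x - t • z) := (lintegral_sub_right_eq_self g (t • z)).symm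
    _ ≤ _ := lintegral_mono fun x => le_iSup₂ (f := fun z (_ : z ∈ L) => g (x - t • z)) z hz

lemma exp_bound (hg : Good K g) (hmid : ∀ x y, g x * g y ≤ g ((1/2 : ℝ) • (x + y)) ^ 2)
    {L : Set (Euc n)} (hL : IsCompact L) (hn : L.Nonempty) {t : ℝ} (ht : 0 < t) :
    (FF L t g).toReal ≤ (∫⁻ x, g x).toReal *
      Real.exp (t * (∫ x, hs L (fun x => (g x).toReal) x) / (∫⁻ x, g x).toReal) := by
  obtain ⟨R, hR0, hR⟩ := hL.isBounded.exists_pos_norm_le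
  have hM := hg.M_pos
  set M := (∫⁻ x, g x).toReal with hMd
  set D := ∫ x, hs L (fun x => (g x).toReal) x with hD
  have hFM : ∀ t : ℝ, 0 ≤ t → M ≤ (FF L t g).toReal := fun t ht =>
    ENNReal.toReal_mono (hg.FF_ne_top hR ht) (FF_ge hn t)
  have hmid' : ∀ t : ℝ, 0 ≤ t → (FF L t g).toReal * M ≤ (FF L (t/2) g).toReal ^ 2 := by
    intro t ht
    have := ENNReal.toReal_mono (ENNReal.pow_ne_top (hg.FF_ne_top hR (by positivity : 0 ≤ t/2)))
      (hg.mid_FF hmid L t)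
    rwa [ENNReal.toReal_mul, ENNReal.toReal_pow] at this
  have hlog : ∀ t : ℝ, 0 ≤ t → Real.log ((FF L t g).toReal / M) ≤
      2 * Real.log ((FF L (t/2) g).toReal / M) := by
    intro t ht
    have h1 := hFM t ht
    have h2 := hFM (t/2) (by positivity)
    have h3 := hmid' t ht
    have : (2:ℝ) * Real.log ((FF L (t/2) g).toReal / M) = Real.log (((FF L (t/2) g).toReal / M)^2) := by
      rw [Real.log_pow]; norm_num
    rw [this]
    apply Real.log_le_log
    · apply div_pos (hM.trans_le h1) hM
    · rw [div_pow, div_le_div_iff₀ hM (by positivity)]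
      nlinarith
  have hit : ∀ k : ℕ, Real.log ((FF L t g).toReal / M) ≤
      2 ^ k * Real.log ((FF L (t/2^k) g).toReal / M) := by
    intro k
    induction k with
    | zero => simp
    | succ k ih =>
      have := hlog (t / 2^k) (by positivity)
      have e : t / 2^(k+1) = t / 2^k / 2 := by rw [pow_succ]; field_simp
      rw [e, pow_succ]
      have h2 : (0:ℝ) < 2^k := by positivity
      nlinarith
  have hk : ∀ k : ℕ, Real.log ((FF L t g).toReal / M) ≤
      t / M * (((FF L (t/2^k) g).toReal - M) / (t / 2^k)) := by
    intro k
    refine (hit k).trans ?_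
    have h2 := hFM (t/2^k) (by positivity)
    have h1 := Real.log_le_sub_one_of_pos (div_pos (hM.trans_le h2) hM)
    calc _ ≤ 2^k * ((FF L (t/2^k) g).toReal / M - 1) := by gcongr
      _ = _ := by field_simp
  have hseq : Tendsto (fun k : ℕ => t / 2^k) atTop (𝓝[>] 0) := by
    rw [tendsto_nhdsWithin_iff]
    refine ⟨?_, Eventually.of_forall fun k => by simp only [mem_Ioi]; positivity⟩
    exact Tendsto.div_atTop tendsto_const_nhds (tendsto_pow_atTop_atTop_of_one_lt (by norm_num))
  have hlim := ((hg.tend hL hn).comp hseq).const_mul (t / M)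
  have hfin := ge_of_tendsto hlim (Eventually.of_forall hk)
  rw [Real.log_le_iff_le_exp (div_pos (hM.trans_le (hFM t ht.le)) hM), div_le_iff₀ hM] at hfin
  rw [mul_comm M]
  have e : t * D / M = t / M * D := by ring
  rw [e]
  exact hfin

end Good

/-- Normalised Laplace density. -/
def rho {n : ℕ} (w : Euc n) : ℝ≥0∞ :=
  (∫⁻ v : Euc n, ENNReal.ofReal (Real.exp (-‖v‖)))⁻¹ * ENNReal.ofReal (Real.exp (-‖w‖))

/-- Mollification at scale `1/m`. -/
def mol {n : ℕ} (m : ℝ) (g : Euc n → ℝ≥0∞) (x : Euc n) : ℝ≥0∞ :=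
  ∫⁻ w, g (x - m⁻¹ • w) * rho w

lemma integrable_exp_norm (n : ℕ) : Integrable (fun v : Euc n => Real.exp (-‖v‖)) := by
  have hr : ((Module.finrank ℝ (Euc n) : ℕ) : ℝ) < ((n + 1 : ℕ) : ℝ) := by
    simp
  refine Integrable.mono' ((integrable_one_add_norm (μ := volume) hr).const_mul
    (((n+1).factorial : ℝ) * Real.exp 1)) (by fun_prop) ?_
  refine Eventually.of_forall fun v => ?_
  rw [Real.norm_eq_abs, abs_of_pos (Real.exp_pos _)]
  have h1 := Real.pow_div_factorial_le_exp (1 + ‖v‖) (by positivity) (n + 1)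
  rw [Real.rpow_neg (by positivity), Real.rpow_natCast]
  rw [Real.exp_add] at h1
  have hp : 0 < (1 + ‖v‖) ^ (n+1) := by positivity
  have hq : (0:ℝ) < ((n+1).factorial : ℝ) := by positivity
  rw [div_le_iff₀ hq] at h1
  rw [Real.exp_neg, ← div_eq_mul_inv, le_div_iff₀ hp, inv_mul_le_iff₀ (Real.exp_pos _)]
  linarith

section rho
variable {n : ℕ}

lemma rho_C_ne_top : (∫⁻ v : Euc n, ENNReal.ofReal (Real.exp (-‖v‖))) ≠ ⊤ := by
  have := (integrable_exp_norm n).lintegral_lt_top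
  exact this.ne

lemma rho_C_ne_zero : (∫⁻ v : Euc n, ENNReal.ofReal (Real.exp (-‖v‖))) ≠ 0 := by
  intro h
  rw [lintegral_eq_zero_iff (by fun_prop)] at h
  have : ∀ᵐ x : Euc n, False := by
    filter_upwards [h] with x hx
    simp only [Pi.zero_apply, ENNReal.ofReal_eq_zero] at hx
    exact absurd (Real.exp_pos _) (not_lt.2 hx)
  have h0 : (volume : Measure (Euc n)) = 0 := by simpa using this
  exact (NeZero.ne (volume : Measure (Euc n))) h0

lemma rho_meas : Measurable (rho : Euc n → ℝ≥0∞) := by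
  unfold rho; fun_prop

lemma rho_int : ∫⁻ w : Euc n, rho w = 1 := by
  unfold rho
  rw [lintegral_const_mul _ (by fun_prop), ENNReal.inv_mul_cancel rho_C_ne_zero rho_C_ne_top]

lemma rho_shift (w v : Euc n) : rho (w + v) ≤ ENNReal.ofReal (Real.exp ‖v‖) * rho w := by
  unfold rho
  rw [mul_left_comm, ← ENNReal.ofReal_mul (Real.exp_pos _).le, ← Real.exp_add]
  gcongr
  have := norm_sub_le (w + v) v
  rw [add_sub_cancel_right] at this
  linarith

lemma rho_mid (x y : Euc n) : rho x * rho y ≤ rho ((1/2 : ℝ) • (x + y)) ^ 2 := by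
  unfold rho
  rw [mul_pow, mul_mul_mul_comm, ← sq, ← ENNReal.ofReal_mul (Real.exp_pos _).le,
    ← ENNReal.ofReal_pow (Real.exp_pos _).le, ← Real.exp_add, ← Real.exp_nat_mul]
  gcongr
  rw [norm_smul]
  have := norm_add_le x y
  norm_num
  linarith

lemma mol_prod_meas (m : ℝ) {g : Euc n → ℝ≥0∞} (hg : Measurable g) :
    Measurable (fun p : Euc n × Euc n => g (p.1 - m⁻¹ • p.2) * rho p.2) :=
  (hg.comp (by fun_prop)).mul (rho_meas.comp measurable_snd)

lemma mol_meas (m : ℝ) {g : Euc n → ℝ≥0∞} (hg : Measurable g) : Measurable (mol m g) :=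
  Measurable.lintegral_prod_right' (mol_prod_meas m hg)

lemma mol_mass (m : ℝ) {g : Euc n → ℝ≥0∞} (hg : Measurable g) :
    ∫⁻ x, mol m g x = ∫⁻ x, g x := by
  unfold mol
  rw [lintegral_lintegral_swap (mol_prod_meas m hg).aemeasurable]
  have : ∀ w : Euc n, ∫⁻ x, g (x - m⁻¹ • w) * rho w = (∫⁻ x, g x) * rho w := by
    intro w
    rw [lintegral_mul_const _ (by fun_prop), lintegral_sub_right_eq_self g]
  simp only [this]
  rw [lintegral_const_mul _ rho_meas, rho_int, mul_one]

lemma mol_shift {m : ℝ} (hm : 0 < m) {g : Euc n → ℝ≥0∞} (hg : Measurable g) (x v : Euc n) :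
    mol m g (x + v) ≤ ENNReal.ofReal (Real.exp (m * ‖v‖)) * mol m g x := by
  unfold mol
  rw [← lintegral_add_right_eq_self _ (m • v), ← lintegral_const_mul]
  · refine lintegral_mono fun w => ?_
    have e : x + v - m⁻¹ • (w + m • v) = x - m⁻¹ • w := by
      rw [smul_add, smul_smul, inv_mul_cancel₀ hm.ne', one_smul]; abel
    have h := rho_shift w (m • v)
    rw [norm_smul, Real.norm_eq_abs, abs_of_pos hm] at h
    simp only [e]
    rw [mul_left_comm]
    gcongr
  · exact (hg.comp (by fun_prop)).mul rho_meas

lemma mol_good {m : ℝ} (hm : 0 < m) {g : Euc n → ℝ≥0∞} (hg : Measurable g)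
    (h0 : ∫⁻ x, g x ≠ 0) (ht : ∫⁻ x, g x ≠ ⊤) : Good m (mol m g) := by
  have hsh : ∀ x y, mol m g x ≤ ENNReal.ofReal (Real.exp (m * ‖x - y‖)) * mol m g y := by
    intro x y
    have := mol_shift hm hg y (x - y)
    rwa [add_sub_cancel] at this
  refine ⟨hm.le, ?_, ?_, mol_shift hm hg, mol_meas m hg, by rwa [mol_mass m hg]⟩
  · intro x hx
    apply ht
    rw [← mol_mass m hg]
    have : ∀ y, mol m g y = ⊤ := by
      intro y
      by_contra hy
      exact ne_top_of_le_ne_top (ENNReal.mul_ne_top ENNReal.ofReal_ne_top hy) (hsh x y) hx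
    simp only [this, lintegral_const]
    exact ENNReal.top_mul (Measure.measure_univ_ne_zero.2 (NeZero.ne _))
  · intro x hx
    apply h0
    rw [← mol_mass m hg]
    have : ∀ y, mol m g y = 0 := by
      intro y
      have := hsh y x
      rw [hx, mul_zero] at this
      exact le_antisymm this zero_le
    simp [this]

lemma mol_mid (m : ℝ) {g : Euc n → ℝ≥0∞} (hg : Measurable g)
    (hmid : ∀ x y, g x * g y ≤ g ((1/2 : ℝ) • (x + y)) ^ 2) (x y : Euc n) :
    mol m g x * mol m g y ≤ mol m g ((1/2 : ℝ) • (x + y)) ^ 2 := by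
  refine pl_euc _ _ _ ((hg.comp (by fun_prop)).mul rho_meas) ((hg.comp (by fun_prop)).mul rho_meas)
    ((hg.comp (by fun_prop)).mul rho_meas) fun a b => ?_
  have e : (1/2 : ℝ) • (x + y) - m⁻¹ • (1/2 : ℝ) • (a + b)
      = (1/2 : ℝ) • ((x - m⁻¹ • a) + (y - m⁻¹ • b)) := by module
  simp only [e]
  rw [mul_mul_mul_comm, mul_pow]
  exact mul_le_mul' (hmid _ _) (rho_mid _ _)

lemma mol_FF_le (m : ℝ) {g : Euc n → ℝ≥0∞} (L : Set (Euc n)) (t : ℝ)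
    (hs : Measurable (sS L t g)) : FF L t (mol m g) ≤ FF L t g := by
  unfold FF
  rw [← mol_mass m hs]
  refine lintegral_mono fun x => iSup₂_le fun z hz => ?_
  refine lintegral_mono fun w => ?_
  dsimp only
  gcongr
  rw [sub_right_comm]
  exact le_iSup₂ (f := fun z (_ : z ∈ L) => g (x - m⁻¹ • w - t • z)) z hz

end rho

section approx
variable {n : ℕ}

lemma supConv_eq (f : Euc n → ℝ) (L : Set (Euc n)) {t : ℝ} (ht : 0 < t) (x : Euc n) :
    supConv f (dil t (L.indicator fun _ => (1 : ℝ))) x = sS L t (fun y => ENNReal.ofReal (f y)) x := by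
  unfold supConv sS dil
  apply le_antisymm
  · refine iSup_le fun y => ?_
    by_cases hy : t⁻¹ • (x - y) ∈ L
    · rw [indicator_of_mem hy, Real.one_rpow, mul_one]
      have : y = x - t • (t⁻¹ • (x - y)) := by
        rw [smul_smul, mul_inv_cancel₀ ht.ne', one_smul]; abel
      conv_lhs => rw [this]
      exact le_iSup₂ (f := fun z (_ : z ∈ L) => ENNReal.ofReal (f (x - t • z))) _ hy
    · rw [indicator_of_notMem hy, Real.zero_rpow ht.ne']
      simp
  · refine iSup₂_le fun z hz => ?_
    refine le_trans ?_ (le_iSup _ (x - t • z))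
    have : t⁻¹ • (x - (x - t • z)) = z := by
      rw [sub_sub_cancel, smul_smul, inv_mul_cancel₀ ht.ne', one_smul]
    rw [this, indicator_of_mem hz, Real.one_rpow, mul_one]

lemma sS_attained {g : Euc n → ℝ≥0∞} (hg : UpperSemicontinuous g) {L : Set (Euc n)}
    (hL : IsCompact L) (hn : L.Nonempty) (t : ℝ) (x : Euc n) :
    ∃ z ∈ L, sS L t g x = g (x - t • z) := by
  have hu : UpperSemicontinuous (fun z => g (x - t • z)) :=
    hg.comp (by fun_prop)
  obtain ⟨z, hz, hmax⟩ := UpperSemicontinuousOn.exists_isMaxOn hn hL (hu.upperSemicontinuousOn L)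
  exact ⟨z, hz, le_antisymm (iSup₂_le fun w hw => hmax hw)
    (le_iSup₂ (f := fun z (_ : z ∈ L) => g (x - t • z)) z hz)⟩

lemma sS_meas_usc {g : Euc n → ℝ≥0∞} (hg : UpperSemicontinuous g) {L : Set (Euc n)}
    (hL : IsCompact L) (hn : L.Nonempty) (t : ℝ) : Measurable (sS L t g) := by
  refine measurable_of_Ici fun a => ?_
  have : sS L t g ⁻¹' Ici a = (g ⁻¹' Ici a) + (t • L) := by
    ext x
    simp only [mem_preimage, mem_Ici, Set.mem_add]
    constructor
    · intro h
      obtain ⟨z, hz, e⟩ := sS_attained hg hL hn t x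
      exact ⟨x - t • z, e ▸ h, t • z, smul_mem_smul_set hz, by abel⟩
    · rintro ⟨y, hy, _, ⟨z, hz, rfl⟩, rfl⟩
      refine le_trans hy ?_
      have := le_iSup₂ (f := fun z' (_ : z' ∈ L) => g (y + t • z - t • z')) z hz
      simpa [sS] using this
  rw [this]
  have hc : IsCompact (t • L) := hL.image (continuous_const_smul t)
  exact ((hg.isClosed_preimage a).add_right_of_isCompact hc).measurableSet

lemma ball_exists {f : Euc n → ℝ} (hf0 : ∀ x, 0 ≤ f x) (hflc : LogConcaveFn f)
    (hfpos : 0 < totalMass f) : ∃ x₀ : Euc n, ∃ r > 0, ∃ c > 0, ∀ w ∈ Metric.ball x₀ r, c ≤ f w := by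
  by_contra hcon
  push Not at hcon
  have hz : ∀ k : ℕ, volume {x | 1 / ((k:ℝ) + 1) ≤ f x} = 0 := by
    intro k
    have hk : (0:ℝ) < 1 / ((k:ℝ) + 1) := by positivity
    set s := {x | 1 / ((k:ℝ) + 1) ≤ f x} with hs
    have hconv : Convex ℝ s := by
      intro x hx y hy a b ha hb hab
      have ha' : a = 1 - b := by linarith
      subst ha'
      have := hflc x y b hb (by linarith)
      refine le_trans ?_ this
      set q := 1 / ((k:ℝ) + 1) with hq
      calc q = q ^ (1 - b) * q ^ b := by rw [← Real.rpow_add hk]; simp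
        _ ≤ f x ^ (1 - b) * f y ^ b := by
          have hx' : q ≤ f x := hx
          have hy' : q ≤ f y := hy
          have := hf0 x
          exact mul_le_mul (Real.rpow_le_rpow hk.le hx' ha) (Real.rpow_le_rpow hk.le hy' hb)
            (Real.rpow_nonneg hk.le _) (Real.rpow_nonneg (hf0 x) _)
    have hcap : interior s = ∅ := by
      rw [Set.eq_empty_iff_forall_notMem]
      intro x hx
      rw [mem_interior_iff_mem_nhds, Metric.mem_nhds_iff] at hx
      obtain ⟨r, hr, hsub⟩ := hx
      obtain ⟨w, hw, hlt⟩ := hcon x r hr _ hk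
      exact absurd (hsub hw) (not_le.2 hlt)
    have h1 : s ⊆ frontier s := by
      rw [frontier, hcap, sdiff_empty]; exact subset_closure
    exact measure_mono_null h1 (hconv.addHaar_frontier volume)
  have hU : {x | 0 < f x} ⊆ ⋃ k : ℕ, {x | 1 / ((k:ℝ) + 1) ≤ f x} := by
    intro x hx
    obtain ⟨k, hk⟩ := exists_nat_one_div_lt (show 0 < f x from hx)
    exact mem_iUnion.2 ⟨k, hk.le⟩
  have h0 : volume {x | 0 < f x} = 0 := measure_mono_null hU (measure_iUnion_null hz)
  have hae : ∀ᵐ x, ENNReal.ofReal (f x) = 0 := by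
    rw [ae_iff]
    refine measure_mono_null ?_ h0
    intro x hx
    simpa using hx
  have : totalMass f = 0 := by
    unfold totalMass
    rw [lintegral_congr_ae hae]; simp
  exact hfpos.ne' this

/-- ENNReal version of log-concavity. -/
def ELC (g : Euc n → ℝ≥0∞) : Prop := ∀ x y : Euc n, ∀ l : ℝ, 0 < l → l < 1 →
    g x ^ (1 - l) * g y ^ l ≤ g ((1 - l) • x + l • y)

lemma elc_of {f : Euc n → ℝ} (hf0 : ∀ x, 0 ≤ f x) (hflc : LogConcaveFn f) :
    ELC (fun x => ENNReal.ofReal (f x)) := by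
  intro x y l h0 h1
  simp only
  rw [ENNReal.ofReal_rpow_of_nonneg (hf0 x) (by linarith), ENNReal.ofReal_rpow_of_nonneg (hf0 y) h0.le,
    ← ENNReal.ofReal_mul (Real.rpow_nonneg (hf0 x) _)]
  exact ENNReal.ofReal_le_ofReal (hflc x y l h0.le h1.le)

lemma ELC.mid {g : Euc n → ℝ≥0∞} (h : ELC g) (x y : Euc n) :
    g x * g y ≤ g ((1/2 : ℝ) • (x + y)) ^ 2 := by
  have h1 := h x y (1/2) (by norm_num) (by norm_num)
  have h2 := pow_le_pow_left₀ zero_le h1 2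
  have e : ∀ a : ℝ≥0∞, (a ^ (1/2 : ℝ)) ^ 2 = a := by
    intro a
    rw [← ENNReal.rpow_natCast, ← ENNReal.rpow_mul]; norm_num
  have e1 : (1 - 1/2 : ℝ) = 1/2 := by norm_num
  rw [e1, mul_pow, e, e, ← smul_add] at h2
  exact h2

lemma mol_lower {g : Euc n → ℝ≥0∞} (h : ELC g) {x₀ : Euc n} {r : ℝ} {c : ℝ≥0∞}
    (hc : ∀ w ∈ Metric.ball x₀ r, c ≤ g w) {l : ℝ} (hl0 : 0 < l) (hl1 : l < 1) {m : ℝ} (hm : 0 < m)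
    (y : Euc n) :
    (∫⁻ w in Metric.ball (0 : Euc n) (m * l * r), rho w) * c ^ l * g y ^ (1 - l)
      ≤ mol m g ((1 - l) • y + l • x₀) := by
  unfold mol
  rw [mul_assoc, ← lintegral_mul_const _ rho_meas]
  refine le_trans ?_ (setLIntegral_le_lintegral (Metric.ball (0 : Euc n) (m * l * r)) _)
  refine setLIntegral_mono' measurableSet_ball fun w hw => ?_
  rw [mul_comm]
  gcongr
  have e : (1 - l) • y + l • x₀ - m⁻¹ • w = (1 - l) • y + l • (x₀ - (m * l)⁻¹ • w) := by
    rw [smul_sub, smul_smul, mul_inv, mul_comm m⁻¹, ← mul_assoc, mul_inv_cancel₀ hl0.ne', one_mul]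
    abel
  rw [e]
  refine le_trans ?_ (h _ _ l hl0 hl1)
  rw [mul_comm]
  gcongr
  apply hc
  rw [Metric.mem_ball, dist_eq_norm, sub_sub_cancel_left, norm_neg, norm_smul, norm_inv,
    Real.norm_eq_abs, abs_of_pos (by positivity), inv_mul_lt_iff₀ (by positivity)]
  simpa using hw

lemma sS_lower {g : Euc n → ℝ≥0∞} (h : ELC g) {x₀ : Euc n} {r : ℝ} {c : ℝ≥0∞}
    (hc : ∀ w ∈ Metric.ball x₀ r, c ≤ g w) {l : ℝ} (hl0 : 0 < l) (hl1 : l < 1) {m : ℝ} (hm : 0 < m)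
    {L : Set (Euc n)} (hLc : Convex ℝ L) {z₀ : Euc n} (hz₀ : z₀ ∈ L) (t : ℝ) (x : Euc n) :
    (∫⁻ w in Metric.ball (0 : Euc n) (m * l * r), rho w) * c ^ l * sS L t g x ^ (1 - l)
      ≤ sS L t (mol m g) ((1 - l) • x + l • (x₀ + t • z₀)) := by
  have e : sS L t g x ^ (1 - l) = ⨆ z ∈ L, g (x - t • z) ^ (1 - l) := by
    unfold sS
    exact (ENNReal.orderIsoRpow (1 - l) (by linarith)).map_iSup₂ _
  rw [e]
  simp only [ENNReal.mul_iSup]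
  refine iSup₂_le fun z hz => ?_
  refine (mol_lower h hc hl0 hl1 hm (x - t • z)).trans ?_
  have hz1 : (1 - l) • z + l • z₀ ∈ L := hLc hz hz₀ (by linarith) hl0.le (by ring)
  have := le_iSup₂ (f := fun z (_ : z ∈ L) =>
    mol m g ((1 - l) • x + l • (x₀ + t • z₀) - t • z)) _ hz1
  refine le_trans (le_of_eq ?_) this
  congr 1
  module

lemma lint_affine (G : Euc n → ℝ≥0∞) (hG : Measurable G) {a : ℝ} (ha : 0 < a) (v : Euc n) :
    ENNReal.ofReal (a ^ n) * ∫⁻ x, G (a • x + v) = ∫⁻ x, G x := by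
  have h1 : ∫⁻ x, G (a • x + v) = ENNReal.ofReal (|(a ^ n)⁻¹|) * ∫⁻ x, G (x + v) := by
    have := Measure.map_addHaar_smul (volume : Measure (Euc n)) ha.ne'
    rw [finrank_euclideanSpace_fin] at this
    rw [← lintegral_map (f := fun x => G (x + v)) (g := fun x => a • x) (by fun_prop) (by fun_prop),
      this, lintegral_smul_measure, smul_eq_mul]
  have hp : 0 < a ^ n := by positivity
  rw [h1, lintegral_add_right_eq_self, ← mul_assoc, ← ENNReal.ofReal_mul hp.le,
    abs_of_pos (by positivity), mul_inv_cancel₀ hp.ne']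
  simp

end approx

/-- Mollification scales. -/
def mscale (k : ℕ) : ℝ := ((k : ℝ) + 2) ^ 2

lemma mscale_pos (k : ℕ) : 0 < mscale k := by unfold mscale; positivity

lemma FF_approx {n : ℕ} {g : Euc n → ℝ≥0∞} (h : ELC g) (hu : UpperSemicontinuous g)
    (hgt : ∀ x, g x ≠ ⊤)
    (h0 : ∫⁻ x, g x ≠ 0) (ht : ∫⁻ x, g x ≠ ⊤) {x₀ : Euc n} {r c : ℝ} (hr : 0 < r) (hc0 : 0 < c)
    (hc : ∀ w ∈ Metric.ball x₀ r, ENNReal.ofReal c ≤ g w)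
    {L : Set (Euc n)} (hL : IsCompact L) (hLc : Convex ℝ L) (hn : L.Nonempty) (t : ℝ) :
    FF L t g ≤ liminf (fun k => FF L t (mol (mscale k) g)) atTop := by
  obtain ⟨z₀, hz₀⟩ := hn
  have hSm := sS_meas_usc hu hL ⟨z₀, hz₀⟩ t
  have hSt : ∀ x, sS L t g x ≠ ⊤ := by
    intro x
    obtain ⟨z, _, e⟩ := sS_attained hu hL ⟨z₀, hz₀⟩ t x
    rw [e]; exact hgt _
  set l : ℕ → ℝ := fun k => 1 / ((k:ℝ) + 2) with hl
  have hl0 : ∀ k, 0 < l k := fun k => by simp only [hl]; positivity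
  have hl1 : ∀ k, l k < 1 := fun k => by
    simp only [hl]; rw [div_lt_one (by positivity)]
    have : (0:ℝ) ≤ k := by positivity
    linarith
  have hlt : Tendsto l atTop (𝓝 0) := by
    refine Tendsto.div_atTop tendsto_const_nhds ?_
    exact tendsto_atTop_add_const_right _ _ tendsto_natCast_atTop_atTop
  set N : ℕ → ℝ≥0∞ := fun k => ∫⁻ w in Metric.ball (0 : Euc n) (mscale k * l k * r), rho w with hN
  have hNt : Tendsto N atTop (𝓝 1) := by
    have e : ∀ k, mscale k * l k * r = ((k:ℝ) + 2) * r := by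
      intro k; simp only [hl, mscale]; field_simp
    have hNm : N = fun k : ℕ => (volume.withDensity rho) (Metric.ball (0 : Euc n) (((k:ℝ) + 2) * r)) := by
      ext k
      rw [withDensity_apply _ measurableSet_ball, ← e]
    rw [hNm]
    have hU : ⋃ k : ℕ, Metric.ball (0 : Euc n) (((k:ℝ) + 2) * r) = univ := by
      rw [Set.eq_univ_iff_forall]
      intro x
      obtain ⟨k, hk⟩ := exists_nat_gt (‖x‖ / r)
      refine mem_iUnion.2 ⟨k, ?_⟩
      rw [mem_ball_zero_iff]
      rw [div_lt_iff₀ hr] at hk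
      nlinarith
    have h1 := tendsto_measure_iUnion_atTop (μ := volume.withDensity (rho : Euc n → ℝ≥0∞))
      (s := fun k : ℕ => Metric.ball (0 : Euc n) (((k:ℝ) + 2) * r)) (by
        intro i j hij
        refine Metric.ball_subset_ball ?_
        have : (i:ℝ) ≤ j := by exact_mod_cast hij
        gcongr)
    rw [hU, withDensity_apply _ MeasurableSet.univ, setLIntegral_univ, rho_int] at h1
    exact h1
  have hct : Tendsto (fun k => ENNReal.ofReal c ^ l k) atTop (𝓝 1) := by
    have h1 : Tendsto (fun k => c ^ l k) atTop (𝓝 (c ^ (0:ℝ))) :=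
      ((Real.continuousAt_const_rpow hc0.ne').tendsto).comp hlt
    have h2 := ENNReal.tendsto_ofReal h1
    simp only [Real.rpow_zero, ENNReal.ofReal_one] at h2
    refine h2.congr fun k => ?_
    rw [ENNReal.ofReal_rpow_of_pos hc0]
  have hpt : Tendsto (fun k => ENNReal.ofReal ((1 - l k) ^ n)) atTop (𝓝 1) := by
    have h1 : Tendsto (fun k => (1 - l k) ^ n) atTop (𝓝 ((1 - 0) ^ n)) :=
      (tendsto_const_nhds.sub hlt).pow n
    have h2 := ENNReal.tendsto_ofReal h1
    simpa using h2
  set H : ℕ → Euc n → ℝ≥0∞ := fun k x =>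
    ENNReal.ofReal ((1 - l k) ^ n) * (N k * ENNReal.ofReal c ^ l k * sS L t g x ^ (1 - l k)) with hH
  have hHle : ∀ k, ∫⁻ x, H k x ≤ FF L t (mol (mscale k) g) := by
    intro k
    have hgood := mol_good (mscale_pos k) hu.measurable h0 ht
    have := lint_affine (sS L t (mol (mscale k) g)) (hgood.sS_meas L t) (a := 1 - l k)
      (by linarith [hl1 k]) (l k • (x₀ + t • z₀))
    unfold FF
    rw [← this, ← lintegral_const_mul']
    · refine lintegral_mono fun x => ?_
      refine mul_le_mul_right ?_ _
      exact sS_lower h hc (hl0 k) (hl1 k) (mscale_pos k) hLc hz₀ t x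
    · exact ENNReal.ofReal_ne_top
  have hlim : ∀ x, Tendsto (fun k => H k x) atTop (𝓝 (sS L t g x)) := by
    intro x
    have hS : Tendsto (fun k => sS L t g x ^ (1 - l k)) atTop (𝓝 (sS L t g x)) := by
      by_cases hx : sS L t g x = 0
      · rw [hx]
        refine tendsto_const_nhds.congr fun k => ?_
        rw [ENNReal.zero_rpow_of_pos (by linarith [hl1 k])]
      · have hp := ENNReal.toReal_pos hx (hSt x)
        have h1 : Tendsto (fun k => (sS L t g x).toReal ^ (1 - l k)) atTop
            (𝓝 ((sS L t g x).toReal ^ (1 - 0 : ℝ))) :=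
          ((Real.continuousAt_const_rpow hp.ne').tendsto).comp (tendsto_const_nhds.sub hlt)
        have h2 := ENNReal.tendsto_ofReal h1
        rw [sub_zero, Real.rpow_one, ENNReal.ofReal_toReal (hSt x)] at h2
        refine h2.congr fun k => ?_
        rw [← ENNReal.ofReal_rpow_of_pos hp, ENNReal.ofReal_toReal (hSt x)]
    have h2 := ENNReal.Tendsto.mul hNt (Or.inl one_ne_zero) hct (Or.inl one_ne_zero)
    rw [one_mul] at h2
    have h3 := ENNReal.Tendsto.mul h2 (Or.inl one_ne_zero) hS (Or.inr ENNReal.one_ne_top)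
    rw [one_mul] at h3
    have h4 := ENNReal.Tendsto.mul hpt (Or.inl one_ne_zero) h3 (Or.inr ENNReal.one_ne_top)
    rw [one_mul] at h4
    exact h4
  calc FF L t g = ∫⁻ x, liminf (fun k => H k x) atTop := by
        unfold FF; congr 1; ext x; rw [(hlim x).liminf_eq]
    _ ≤ liminf (fun k => ∫⁻ x, H k x) atTop := lintegral_liminf_le fun k => by
        exact ((hSm.pow_const _).const_mul _).const_mul _
    _ ≤ _ := liminf_le_liminf (Eventually.of_forall hHle)

section final
variable {n : ℕ}

lemma deltaQuot_eq (f : Euc n → ℝ) (L : Set (Euc n)) {t : ℝ} (ht : 0 < t) :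
    deltaQuot f (L.indicator fun _ => (1 : ℝ)) t = ((t⁻¹ : ℝ) : EReal) *
      (((FF L t (fun y => ENNReal.ofReal (f y)) : ℝ≥0∞) : EReal) - ((totalMass f : ℝ≥0∞) : EReal)) := by
  unfold deltaQuot FF
  simp only [supConv_eq f L ht]

lemma deltaQuot_real (f : Euc n → ℝ) (L : Set (Euc n)) {t : ℝ} (ht : 0 < t) (hM : totalMass f ≠ ⊤)
    (hF : FF L t (fun y => ENNReal.ofReal (f y)) ≠ ⊤) :
    deltaQuot f (L.indicator fun _ => (1 : ℝ)) t =
      ((((FF L t (fun y => ENNReal.ofReal (f y))).toReal - (totalMass f).toReal) / t : ℝ) : EReal) := by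
  rw [deltaQuot_eq f L ht, ← EReal.coe_ennreal_toReal hM, ← EReal.coe_ennreal_toReal hF]
  norm_cast
  rw [div_eq_inv_mul]

lemma deltaQuot_top (f : Euc n → ℝ) (L : Set (Euc n)) {t : ℝ} (ht : 0 < t) (hM : totalMass f ≠ ⊤)
    (hF : FF L t (fun y => ENNReal.ofReal (f y)) = ⊤) :
    deltaQuot f (L.indicator fun _ => (1 : ℝ)) t = ⊤ := by
  rw [deltaQuot_eq f L ht, hF]
  have : ((⊤ : ℝ≥0∞) : EReal) - (totalMass f : EReal) = ⊤ := by
    rw [EReal.coe_ennreal_top]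
    lift totalMass f to ℝ≥0 using hM with a
    exact EReal.top_sub_coe a
  rw [this]
  exact EReal.coe_mul_top_of_pos (inv_pos.2 ht)

lemma deltaQuot_empty (f : Euc n → ℝ) (h0 : 0 < totalMass f) (hM : totalMass f ≠ ⊤) :
    Tendsto (deltaQuot f ((∅ : Set (Euc n)).indicator fun _ => (1 : ℝ))) (𝓝[>] (0 : ℝ)) (𝓝 ⊥) := by
  have hFF : ∀ t, FF (∅ : Set (Euc n)) t (fun y => ENNReal.ofReal (f y)) = 0 := by
    intro t; simp [FF, sS]
  have h1 : Tendsto (fun t : ℝ => (0 - (totalMass f).toReal) / t) (𝓝[>] 0) atBot := by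
    simp only [div_eq_mul_inv]
    refine Tendsto.const_mul_atTop_of_neg ?_ tendsto_inv_nhdsGT_zero
    have := ENNReal.toReal_pos h0.ne' hM
    linarith
  have h2 := EReal.tendsto_coe_nhds_bot_iff.2 h1
  refine h2.congr' ?_
  filter_upwards [self_mem_nhdsWithin] with t ht
  rw [deltaQuot_real f ∅ ht hM (by rw [hFF]; simp), hFF]
  simp

lemma deltaQuot_mono (f : Euc n → ℝ) (L B : Set (Euc n)) {t : ℝ} (ht : 0 < t)
    (h : FF L t (fun y => ENNReal.ofReal (f y)) ≤ FF B t (fun y => ENNReal.ofReal (f y))) :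
    deltaQuot f (L.indicator fun _ => (1 : ℝ)) t ≤ deltaQuot f (B.indicator fun _ => (1 : ℝ)) t := by
  rw [deltaQuot_eq f L ht, deltaQuot_eq f B ht]
  refine mul_le_mul_of_nonneg_left ?_ (by exact_mod_cast (inv_pos.2 ht).le)
  exact EReal.sub_le_sub (by exact_mod_cast h) le_rfl

lemma deltaQuot_nonneg (f : Euc n → ℝ) (L : Set (Euc n)) (hn : L.Nonempty) (hM : totalMass f ≠ ⊤)
    {t : ℝ} (ht : 0 < t) :
    0 ≤ deltaQuot f (L.indicator fun _ => (1 : ℝ)) t := by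
  by_cases hF : FF L t (fun y => ENNReal.ofReal (f y)) = ⊤
  · rw [deltaQuot_top f L ht hM hF]; exact le_top
  · rw [deltaQuot_real f L ht hM hF]
    have : (totalMass f).toReal ≤ (FF L t (fun y => ENNReal.ofReal (f y))).toReal :=
      ENNReal.toReal_mono hF (Good.FF_ge hn t)
    exact_mod_cast div_nonneg (by linarith) ht.le

lemma FF_add_ge (g : Euc n → ℝ≥0∞) (L B : Set (Euc n)) (hB : B.Nonempty) (t : ℝ) :
    FF L t g ≤ FF (L + B) t g := by
  obtain ⟨b, hb⟩ := hB
  unfold FF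
  rw [← lintegral_sub_right_eq_self (fun x => sS L t g x) (t • b)]
  refine lintegral_mono fun x => iSup₂_le fun z hz => ?_
  have := le_iSup₂ (f := fun z' (_ : z' ∈ L + B) => g (x - t • z')) (z + b) (Set.add_mem_add hz hb)
  refine le_trans (le_of_eq ?_) this
  congr 1; module

end final

/-- Abstract approximation data. -/
structure Apx (M : ℝ) (F : ℝ → ℝ≥0∞) (U : ℕ → ℝ → ℝ≥0∞) (D : ℕ → ℝ) : Prop where
  Mpos : 0 < M
  le : ∀ k t, 0 < t → U k t ≤ F t
  fin : ∀ k t, 0 < t → U k t ≠ ⊤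
  eb : ∀ k t, 0 < t → (U k t).toReal ≤ M * Real.exp (t * D k / M)
  td : ∀ k, Tendsto (fun t : ℝ => ((U k t).toReal - M) / t) (𝓝[>] 0) (𝓝 (D k))
  li : ∀ t, 0 < t → F t ≤ liminf (fun k => U k t) atTop
  ge : ∀ t, 0 < t → ENNReal.ofReal M ≤ F t

namespace Apx
variable {M : ℝ} {F : ℝ → ℝ≥0∞} {U : ℕ → ℝ → ℝ≥0∞} {D : ℕ → ℝ}

lemma D_le (h : Apx M F U D) {d : ℝ} (hF : ∀ᶠ t in 𝓝[>] (0:ℝ), F t ≠ ⊤)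
    (hd : Tendsto (fun t : ℝ => ((F t).toReal - M) / t) (𝓝[>] 0) (𝓝 d)) (k : ℕ) : D k ≤ d := by
  refine le_of_tendsto_of_tendsto (h.td k) hd ?_
  filter_upwards [hF, self_mem_nhdsWithin] with t h1 h2
  have h2' : (0:ℝ) < t := h2
  have := ENNReal.toReal_mono h1 (h.le k t h2')
  gcongr

lemma lt_D (h : Apx M F U D) {d : ℝ} (hF : ∀ᶠ t in 𝓝[>] (0:ℝ), F t ≠ ⊤)
    (hd : Tendsto (fun t : ℝ => ((F t).toReal - M) / t) (𝓝[>] 0) (𝓝 d)) {a : ℝ} (ha : a < d) :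
    ∀ᶠ k in atTop, a < D k := by
  have hM := h.Mpos
  have ht0 : Tendsto (fun t : ℝ => t) (𝓝[>] 0) (𝓝 0) := tendsto_id.mono_left nhdsWithin_le_nhds
  have h1 : Tendsto (fun t : ℝ => M * (((F t).toReal - M) / t) / (M + t * (((F t).toReal - M) / t)))
      (𝓝[>] 0) (𝓝 (M * d / (M + 0 * d))) := by
    refine (tendsto_const_nhds.mul hd).div (tendsto_const_nhds.add (ht0.mul hd)) ?_
    simpa using hM.ne'
  have e : M * d / (M + 0 * d) = d := by rw [zero_mul, add_zero]; field_simp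
  rw [e] at h1
  obtain ⟨t, hta, htF, ht⟩ := ((h1.eventually_const_lt ha).and
    (hF.and self_mem_nhdsWithin)).exists
  have ht : (0:ℝ) < t := ht
  have hFM : M ≤ (F t).toReal := by
    have := ENNReal.toReal_mono htF (h.ge t ht)
    rwa [ENNReal.toReal_ofReal hM.le] at this
  set f := (F t).toReal with hf
  have hfp : 0 < f := hM.trans_le hFM
  have e2 : M * ((f - M) / t) / (M + t * ((f - M) / t)) = M / t * (1 - (f / M)⁻¹) := by
    have : M + t * ((f - M) / t) = f := by field_simp; ring
    rw [this]; field_simp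
  rw [e2] at hta
  have hlog := Real.one_sub_inv_le_log_of_pos (div_pos hfp hM)
  have h2 : a * t / M < Real.log (f / M) := by
    have h3 : a < M / t * Real.log (f / M) := hta.trans_le (by gcongr)
    rw [div_mul_eq_mul_div, lt_div_iff₀ ht] at h3
    rw [div_lt_iff₀ hM]; linarith
  have h3 : M * Real.exp (a * t / M) < f := by
    have := (Real.lt_log_iff_exp_lt (div_pos hfp hM)).1 h2
    rw [lt_div_iff₀ hM] at this; linarith
  have h4 : ENNReal.ofReal (M * Real.exp (a * t / M)) < liminf (fun k => U k t) atTop := by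
    refine lt_of_lt_of_le ?_ (h.li t ht)
    rw [← ENNReal.ofReal_toReal htF]
    exact (ENNReal.ofReal_lt_ofReal_iff hfp).2 h3
  filter_upwards [eventually_lt_of_lt_liminf h4] with k hk
  have h5 : M * Real.exp (a * t / M) < (U k t).toReal :=
    (ENNReal.ofReal_lt_iff_lt_toReal (by positivity) (h.fin k t ht)).1 hk
  have h6 := h5.trans_le (h.eb k t ht)
  have h7 := Real.exp_lt_exp.1 (lt_of_mul_lt_mul_left h6 hM.le)
  rw [div_lt_div_iff_of_pos_right hM] at h7
  nlinarith

lemma F_le (h : Apx M F U D) {s : ℝ} (hs : ∀ k, D k ≤ s) {t : ℝ} (ht : 0 < t) :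
    F t ≤ ENNReal.ofReal (M * Real.exp (t * s / M)) := by
  have hM := h.Mpos
  refine (h.li t ht).trans ?_
  refine (liminf_le_liminf (v := fun _ => ENNReal.ofReal (M * Real.exp (t * s / M)))
    (Eventually.of_forall fun k => ?_)).trans (by simp)
  rw [← ENNReal.ofReal_toReal (h.fin k t ht)]
  refine ENNReal.ofReal_le_ofReal ((h.eb k t ht).trans ?_)
  have := hs k
  gcongr

lemma tends (h : Apx M F U D) {s : ℝ} (hs : ∀ k, D k ≤ s) (hl : ∀ a < s, ∃ k, a < D k) :
    Tendsto (fun t : ℝ => ((F t).toReal - M) / t) (𝓝[>] 0) (𝓝 s) := by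
  have hM := h.Mpos
  have hder : Tendsto (fun t : ℝ => (M * Real.exp (t * s / M) - M) / t) (𝓝[>] 0) (𝓝 s) := by
    have h1 : HasDerivAt (fun t : ℝ => M * Real.exp (t * s / M)) s 0 := by
      have := ((((hasDerivAt_id (0:ℝ)).mul_const s).div_const M).exp).const_mul M
      have e : M * (Real.exp (id 0 * s / M) * (1 * s / M)) = s := by
        simp only [id, zero_mul, zero_div, Real.exp_zero, one_mul]; field_simp
      rw [e] at this
      exact this
    have h2 := h1.tendsto_slope_zero_right
    refine h2.congr fun t => ?_
    simp [div_eq_inv_mul]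
  refine tendsto_order.2 ⟨fun a ha => ?_, fun b hb => ?_⟩
  · obtain ⟨k, hk⟩ := hl a ha
    filter_upwards [(h.td k).eventually_const_lt hk, self_mem_nhdsWithin] with t h1 h2
    have ht : (0:ℝ) < t := h2
    refine h1.trans_le ?_
    have := ENNReal.toReal_mono (ne_top_of_le_ne_top ENNReal.ofReal_ne_top (h.F_le hs ht))
      (h.le k t ht)
    gcongr
  · filter_upwards [hder.eventually_lt_const hb, self_mem_nhdsWithin] with t h1 h2
    have ht : (0:ℝ) < t := h2
    refine lt_of_le_of_lt ?_ h1
    have := ENNReal.toReal_mono ENNReal.ofReal_ne_top (h.F_le hs ht)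
    rw [ENNReal.toReal_ofReal (by positivity)] at this
    gcongr

end Apx

lemma apx_of {n : ℕ} {f : Euc n → ℝ}
    (hf0 : ∀ x, 0 ≤ f x) (hfusc : UpperSemicontinuous f) (hflc : LogConcaveFn f)
    (hfpos : 0 < totalMass f) (hffin : totalMass f < ⊤)
    {L : Set (Euc n)} (hL : IsCompact L) (hLc : Convex ℝ L) (hn : L.Nonempty) :
    Apx (totalMass f).toReal (fun t => FF L t (fun y => ENNReal.ofReal (f y)))
      (fun k t => FF L t (mol (mscale k) (fun y => ENNReal.ofReal (f y))))
      (fun k => ∫ x, hs L (fun x => (mol (mscale k) (fun y => ENNReal.ofReal (f y)) x).toReal) x) := by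
  have hu : UpperSemicontinuous (fun y => ENNReal.ofReal (f y)) :=
    ENNReal.continuous_ofReal.comp_upperSemicontinuous hfusc
      (fun a b hab => ENNReal.ofReal_le_ofReal hab)
  have helc := elc_of hf0 hflc
  have hM0 : ∫⁻ y, ENNReal.ofReal (f y) ≠ 0 := hfpos.ne'
  have hMt : ∫⁻ y, ENNReal.ofReal (f y) ≠ ⊤ := hffin.ne
  have hgood := fun k => mol_good (mscale_pos k) hu.measurable hM0 hMt
  have hmass := fun k => mol_mass (mscale k) hu.measurable
  obtain ⟨R, hR0, hR⟩ := hL.isBounded.exists_pos_norm_le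
  obtain ⟨x₀, r, hr, c, hc0, hc⟩ := ball_exists hf0 hflc hfpos
  refine ⟨ENNReal.toReal_pos hM0 hMt, ?_, ?_, ?_, ?_, ?_, ?_⟩
  · intro k t ht
    exact mol_FF_le _ L t (sS_meas_usc hu hL hn t)
  · intro k t ht
    exact (hgood k).FF_ne_top hR ht.le
  · intro k t ht
    have := (hgood k).exp_bound (mol_mid _ hu.measurable helc.mid) hL hn ht
    rw [hmass k] at this
    exact this
  · intro k
    have := (hgood k).tend hL hn
    rw [hmass k] at this
    exact this
  · intro t ht
    exact FF_approx helc hu (fun x => ENNReal.ofReal_ne_top) hM0 hMt hr hc0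
      (fun w hw => ENNReal.ofReal_le_ofReal (hc w hw)) hL hLc hn t
  · intro t ht
    rw [ENNReal.ofReal_toReal hffin.ne]
    exact Good.FF_ge hn t

lemma real_of_tend {n : ℕ} {f : Euc n → ℝ} (hM : totalMass f ≠ ⊤) {L : Set (Euc n)} {d : ℝ}
    (h : Tendsto (deltaQuot f (L.indicator fun _ => (1 : ℝ))) (𝓝[>] (0 : ℝ)) (𝓝 (d : EReal))) :
    (∀ᶠ t in 𝓝[>] (0:ℝ), FF L t (fun y => ENNReal.ofReal (f y)) ≠ ⊤) ∧
    Tendsto (fun t : ℝ => ((FF L t (fun y => ENNReal.ofReal (f y))).toReal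
      - (totalMass f).toReal) / t) (𝓝[>] 0) (𝓝 d) := by
  have h1 : ∀ᶠ t in 𝓝[>] (0:ℝ), FF L t (fun y => ENNReal.ofReal (f y)) ≠ ⊤ := by
    filter_upwards [h.eventually_lt_const (EReal.coe_lt_top d), self_mem_nhdsWithin] with t ht h0 hF
    rw [deltaQuot_top f L h0 hM hF] at ht
    exact lt_irrefl _ ht
  refine ⟨h1, ?_⟩
  rw [← EReal.tendsto_coe]
  refine h.congr' ?_
  filter_upwards [h1, self_mem_nhdsWithin] with t ht h0
  exact deltaQuot_real f L h0 hM ht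

/-- `δ(f, 1_{L+B}) = δ(f, 1_L) + δ(f, 1_B)` for compact convex `L, B`. -/
theorem first_variation_minkowski_additive (n : ℕ) (f : Euc n → ℝ)
    (hf0 : ∀ x, 0 ≤ f x) (hfusc : UpperSemicontinuous f) (hflc : LogConcaveFn f)
    (hfpos : 0 < totalMass f) (hffin : totalMass f < ⊤)
    (L B : Set (Euc n)) (hLcomp : IsCompact L) (hLconv : Convex ℝ L)
    (hBcomp : IsCompact B) (hBconv : Convex ℝ B) :
    ∀ dL dB : EReal,
      Tendsto (deltaQuot f (L.indicator fun _ => (1 : ℝ))) (𝓝[>] (0 : ℝ)) (𝓝 dL) →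
      Tendsto (deltaQuot f (B.indicator fun _ => (1 : ℝ))) (𝓝[>] (0 : ℝ)) (𝓝 dB) →
      Tendsto (deltaQuot f ((L + B).indicator fun _ => (1 : ℝ))) (𝓝[>] (0 : ℝ))
        (𝓝 (dL + dB)) := by
  intro dL dB hdL hdB
  have hM := hffin.ne
  rcases L.eq_empty_or_nonempty with rfl | hLn
  · have := tendsto_nhds_unique hdL (deltaQuot_empty f hfpos hM)
    rw [this, EReal.bot_add, Set.empty_add]
    exact deltaQuot_empty f hfpos hM
  rcases B.eq_empty_or_nonempty with rfl | hBn
  · have := tendsto_nhds_unique hdB (deltaQuot_empty f hfpos hM)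
    rw [this, EReal.add_bot, Set.add_empty]
    exact deltaQuot_empty f hfpos hM
  have hL0 : 0 ≤ dL := ge_of_tendsto hdL (by
    filter_upwards [self_mem_nhdsWithin] with t ht using deltaQuot_nonneg f L hLn hM ht)
  have hB0 : 0 ≤ dB := ge_of_tendsto hdB (by
    filter_upwards [self_mem_nhdsWithin] with t ht using deltaQuot_nonneg f B hBn hM ht)
  have hLb : dL ≠ ⊥ := fun h => by rw [h] at hL0; simp at hL0
  have hBb : dB ≠ ⊥ := fun h => by rw [h] at hB0; simp at hB0
  by_cases hLt : dL = ⊤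
  · rw [hLt, EReal.top_add_of_ne_bot hBb]
    rw [hLt] at hdL
    refine tendsto_nhds_top_mono hdL ?_
    filter_upwards [self_mem_nhdsWithin] with t ht
    exact deltaQuot_mono f _ _ ht (FF_add_ge _ L B hBn t)
  by_cases hBt : dB = ⊤
  · rw [hBt, EReal.add_top_of_ne_bot hLb]
    rw [hBt] at hdB
    refine tendsto_nhds_top_mono hdB ?_
    filter_upwards [self_mem_nhdsWithin] with t ht
    rw [add_comm L B]
    exact deltaQuot_mono f _ _ ht (FF_add_ge _ B L hLn t)
  lift dL to ℝ using ⟨hLt, hLb⟩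
  lift dB to ℝ using ⟨hBt, hBb⟩
  have aL := apx_of hf0 hfusc hflc hfpos hffin hLcomp hLconv hLn
  have aB := apx_of hf0 hfusc hflc hfpos hffin hBcomp hBconv hBn
  have aS := apx_of hf0 hfusc hflc hfpos hffin (hLcomp.add hBcomp) (hLconv.add hBconv)
    (hLn.add hBn)
  obtain ⟨fL, tL⟩ := real_of_tend hM hdL
  obtain ⟨fB, tB⟩ := real_of_tend hM hdB
  have hu : UpperSemicontinuous (fun y => ENNReal.ofReal (f y)) :=
    ENNReal.continuous_ofReal.comp_upperSemicontinuous hfusc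
      (fun a b hab => ENNReal.ofReal_le_ofReal hab)
  have hgood := fun k => mol_good (mscale_pos k) hu.measurable hfpos.ne' hM
  have hadd : ∀ k, ∫ x, hs (L + B)
        (fun x => (mol (mscale k) (fun y => ENNReal.ofReal (f y)) x).toReal) x
      = (∫ x, hs L (fun x => (mol (mscale k) (fun y => ENNReal.ofReal (f y)) x).toReal) x)
      + ∫ x, hs B (fun x => (mol (mscale k) (fun y => ENNReal.ofReal (f y)) x).toReal) x := by
    intro k
    rw [← integral_add ((hgood k).hs_integ hLcomp hLn) ((hgood k).hs_integ hBcomp hBn)]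
    congr 1; ext x
    exact Good.hs_add hLcomp hLn hBcomp hBn _ x
  have hle : ∀ k, ∫ x, hs (L + B)
        (fun x => (mol (mscale k) (fun y => ENNReal.ofReal (f y)) x).toReal) x ≤ dL + dB := by
    intro k
    rw [hadd k]
    exact add_le_add (aL.D_le fL tL k) (aB.D_le fB tB k)
  have hT := aS.tends hle (by
    intro a ha
    obtain ⟨k, h1, h2⟩ := ((aL.lt_D fL tL (a := dL - (dL + dB - a) / 2) (by linarith)).and
      (aB.lt_D fB tB (a := dB - (dL + dB - a) / 2) (by linarith))).exists
    refine ⟨k, ?_⟩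
    rw [hadd k]
    linarith)
  rw [← EReal.coe_add]
  refine (EReal.tendsto_coe.2 hT).congr' ?_
  filter_upwards [self_mem_nhdsWithin] with t ht
  exact (deltaQuot_real f _ ht hM
    (ne_top_of_le_ne_top ENNReal.ofReal_ne_top (aS.F_le hle ht))).symm

end
end
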